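/- arXiv:1505.03772 — 3 statements merged into one kernel-verified Lean document; each statement's English description precedes it below -/
import Mathlib

section
/- Let (B,σ) ∈ Θ0(n,k,a,b,β) with n ≥ 2βk, and let P be the n×n matrix with entries P_{uv} = B_{σ(u)σ(v)}, i.e. P_{uv} = a/n if σ(u) = σ(v) and P_{uv} = b/n otherwise. Then the kth largest singular value of P satisfies λ_k(P) ≥ (a−b)/(2βk). -/
open scoped BigOperators
open Filter

namespace SBM

noncomputable section

/-- Adjacency matrices of graphs on `n` nodes. -/
abbrev Adj (n : ℕ) := Fin n → Fin n → Bool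

/-- 0/1 real value of an entry of the adjacency matrix. -/
def aVal {n : ℕ} (A : Adj n) (u v : Fin n) : ℝ := if A u v then 1 else 0

/-- Probability weight of one adjacency matrix under the SBM with edge
probability matrix `P`: the entries above the diagonal are independent
Bernoulli, the matrix is symmetric with zero diagonal. -/
def weight {n : ℕ} (P : Matrix (Fin n) (Fin n) ℝ) (A : Adj n) : ℝ :=
  if (∀ u, A u u = false) ∧ (∀ u v, A u v = A v u) then
    ∏ u : Fin n, ∏ v : Fin n,
      if u < v then (if A u v then P u v else 1 - P u v) else 1
  else 0

/-- Probability of a set of adjacency matrices under the SBM with edge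
probability matrix `P`. -/
def prob {n : ℕ} (P : Matrix (Fin n) (Fin n) ℝ) (S : Set (Adj n)) : ℝ :=
  ∑ A : Adj n, S.indicator (weight P) A

/-- The edge probability matrix `P u v = B (σ u) (σ v)`. -/
def pMat {n k : ℕ} (B : Matrix (Fin k) (Fin k) ℝ) (σ : Fin n → Fin k) :
    Matrix (Fin n) (Fin n) ℝ := fun u v => B (σ u) (σ v)

/-- Size of the `i`-th community of a label assignment. -/
def comSize {n k : ℕ} (σ : Fin n → Fin k) (i : Fin k) : ℝ :=
  ((Finset.univ.filter fun u => σ u = i).card : ℝ)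

/-- Hamming loss `ℓ0`. -/
def l0 {n k : ℕ} (σ1 σ2 : Fin n → Fin k) : ℝ :=
  ((Finset.univ.filter fun u => σ1 u ≠ σ2 u).card : ℝ) / n

/-- Misclassification proportion: minimum of `ℓ0` over relabelings. -/
def misclass {n k : ℕ} (σh σ : Fin n → Fin k) : ℝ :=
  ⨅ π : Equiv.Perm (Fin k), l0 σh (fun u => π (σ u))

/-- Euclidean norm of a vector. -/
def sqnorm {n : ℕ} (x : Fin n → ℝ) : ℝ := Real.sqrt (∑ i, x i ^ 2)

/-- Operator (spectral) norm of a square matrix. -/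
def opNorm {n : ℕ} (M : Matrix (Fin n) (Fin n) ℝ) : ℝ :=
  sSup { t : ℝ | ∃ x : Fin n → ℝ, sqnorm x = 1 ∧ t = sqnorm (M.mulVec x) }

/-- The `k`-th largest singular value of a square matrix, via the
Courant–Fischer max-min characterization. -/
def kthSingular {n : ℕ} (M : Matrix (Fin n) (Fin n) ℝ) (k : ℕ) : ℝ :=
  sSup { t : ℝ | 0 ≤ t ∧ ∃ V : Submodule ℝ (Fin n → ℝ),
    Module.finrank ℝ V = k ∧ ∀ x ∈ V, t * sqnorm x ≤ sqnorm (M.mulVec x) }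

/-- The Rényi divergence of order 1/2, `I*`. -/
def renyiHalf (n : ℕ) (a b : ℝ) : ℝ :=
  -2 * Real.log (Real.sqrt ((a / n) * (b / n)) +
    Real.sqrt ((1 - a / n) * (1 - b / n)))

/-- The balanced parameter space `Θ₀(n,k,a,b,β)`. -/
def Theta0 (n k : ℕ) (a b β : ℝ) :
    Set (Matrix (Fin k) (Fin k) ℝ × (Fin n → Fin k)) :=
  { p | (∀ i, (n : ℝ) / (β * k) - 1 ≤ comSize p.2 i ∧
          comSize p.2 i ≤ β * n / k + 1) ∧
        (∀ i, p.1 i i = a / n) ∧ ∀ i j, i ≠ j → p.1 i j = b / n }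

/-- Average of the off-diagonal entries of a `k × k` matrix. -/
def offDiagAvg {k : ℕ} (B : Matrix (Fin k) (Fin k) ℝ) : ℝ :=
  (1 / ((k : ℝ) * ((k : ℝ) - 1))) *
    ∑ i : Fin k, ∑ j : Fin k, if i ≠ j then B i j else 0

/-- The general parameter space `Θ(n,k,a,b,λ,β;α)`. -/
def ThetaGen (n k : ℕ) (a b lam β α : ℝ) :
    Set (Matrix (Fin k) (Fin k) ℝ × (Fin n → Fin k)) :=
  { p | (∀ i, (n : ℝ) / (β * k) - 1 ≤ comSize p.2 i ∧
          comSize p.2 i ≤ β * n / k + 1) ∧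
        (∀ i j, p.1 i j = p.1 j i) ∧
        (∀ i j, 0 ≤ p.1 i j ∧ p.1 i j ≤ 1) ∧
        b / (α * n) ≤ offDiagAvg p.1 ∧
        (∀ i j, i ≠ j → p.1 i j ≤ b / n) ∧
        (∃ i j, i ≠ j ∧ p.1 i j = b / n) ∧
        (∀ i, a / n ≤ p.1 i i) ∧ (∃ i, p.1 i i = a / n) ∧
        (∀ i, p.1 i i ≤ α * a / n) ∧
        lam ≤ kthSingular (pMat p.1 p.2) k }

/-- The estimated community `C̃ᵢᵘ` (node `u` itself is excluded). -/
def cluster {n k : ℕ} (u : Fin n) (s : Fin n → Fin k) (i : Fin k) :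
    Finset (Fin n) :=
  Finset.univ.filter fun v => v ≠ u ∧ s v = i

/-- Number of edges within a set of nodes. -/
def edgesWithin {n : ℕ} (A : Adj n) (C : Finset (Fin n)) : ℝ :=
  (∑ v ∈ C, ∑ w ∈ C, aVal A v w) / 2

/-- Number of edges between two disjoint sets of nodes. -/
def edgesBetween {n : ℕ} (A : Adj n) (C D : Finset (Fin n)) : ℝ :=
  ∑ v ∈ C, ∑ w ∈ D, aVal A v w

/-- The connectivity estimates `B̂ᵢⱼᵘ` of Algorithm 1, based on the initial
assignment `s = σ⁰ᵤ`. -/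
def hatB {n k : ℕ} (A : Adj n) (u : Fin n) (s : Fin n → Fin k) (i j : Fin k) :
    ℝ :=
  if i = j then
    edgesWithin A (cluster u s i) /
      (((cluster u s i).card : ℝ) * (((cluster u s i).card : ℝ) - 1) / 2)
  else
    edgesBetween A (cluster u s i) (cluster u s j) /
      (((cluster u s i).card : ℝ) * ((cluster u s j).card : ℝ))

/-- `â_u = n · minᵢ B̂ᵢᵢᵘ`. -/
def hata {n k : ℕ} (A : Adj n) (u : Fin n) (s : Fin n → Fin k) : ℝ :=
  n * ⨅ i : Fin k, hatB A u s i i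

/-- `b̂_u = n · maxᵢ≠ⱼ B̂ᵢⱼᵘ`. -/
def hatb {n k : ℕ} (A : Adj n) (u : Fin n) (s : Fin n → Fin k) : ℝ :=
  n * sSup { x : ℝ | ∃ i j : Fin k, i ≠ j ∧ x = hatB A u s i j }

/-- `t = ½ log (â (1 − b̂/n) / (b̂ (1 − â/n)))`. -/
def tStat (n : ℕ) (ha hb : ℝ) : ℝ :=
  Real.log (ha * (1 - hb / n) / (hb * (1 - ha / n))) / 2

/-- `ρ = −(1/(2t)) log (((â/n)e^{−t} + 1 − â/n)/((b̂/n)e^{t} + 1 − b̂/n))`. -/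
def rhoStat (n : ℕ) (ha hb t : ℝ) : ℝ :=
  -(Real.log (((ha / n) * Real.exp (-t) + 1 - ha / n) /
      ((hb / n) * Real.exp t + 1 - hb / n))) / (2 * t)

/-- Penalized vote of node `u` for label `l`. -/
def vote {n k : ℕ} (A : Adj n) (u : Fin n) (s : Fin n → Fin k) (ρ : ℝ)
    (l : Fin k) : ℝ :=
  (∑ v ∈ cluster u s l, aVal A u v) - ρ * ((cluster u s l).card : ℝ)

/-- `lbl` maximizes the penalized vote of node `u`. -/
def VoteMax {n k : ℕ} (A : Adj n) (u : Fin n) (s : Fin n → Fin k) (ρ : ℝ)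
    (lbl : Fin k) : Prop :=
  ∀ l : Fin k, vote A u s ρ l ≤ vote A u s ρ lbl

/-- `|{v : σU_{u1}(v) = l} ∩ {v : σU_u(v) = σU_u(u)}|`. -/
def consensusCount {n k : ℕ} (σU : Fin n → Fin n → Fin k) (u1 u : Fin n)
    (l : Fin k) : ℕ :=
  (Finset.univ.filter fun v => σU u1 v = l ∧ σU u v = σU u u).card

/-- Specification of the refinement-plus-consensus scheme of Algorithm 1, with
an arbitrary family of penalties `ρ`.  `σ0 u` is the initial assignment
`σ⁰ᵤ`, `σU u` is the refined assignment `σ̂ᵤ`, `σhat` is the final output. -/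
def RefineSpec {n k : ℕ} (A : Adj n) (σ0 σU : Fin n → Fin n → Fin k)
    (ρ : Fin n → ℝ) (σhat : Fin n → Fin k) : Prop :=
  (∀ u v, v ≠ u → σU u v = σ0 u v) ∧
  (∀ u, VoteMax A u (σ0 u) (ρ u) (σU u u)) ∧
  ∀ hn : 0 < n,
    σhat ⟨0, hn⟩ = σU ⟨0, hn⟩ ⟨0, hn⟩ ∧
    ∀ u, u ≠ ⟨0, hn⟩ →
      ∀ l : Fin k, consensusCount σU ⟨0, hn⟩ u l ≤
        consensusCount σU ⟨0, hn⟩ u (σhat u)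

/-- Algorithm 1 with the standard data-driven penalties. -/
def AlgorithmOne {n k : ℕ} (A : Adj n) (σ0 σU : Fin n → Fin n → Fin k)
    (σhat : Fin n → Fin k) : Prop :=
  RefineSpec A σ0 σU
    (fun u => rhoStat n (hata A u (σ0 u)) (hatb A u (σ0 u))
      (tStat n (hata A u (σ0 u)) (hatb A u (σ0 u)))) σhat

/-- Algorithm 1 with the truncated `t_u` (truncation level `log (2/ε0)`). -/
def AlgorithmOneTrunc (ε0 : ℝ) {n k : ℕ} (A : Adj n)
    (σ0 σU : Fin n → Fin n → Fin k) (σhat : Fin n → Fin k) : Prop :=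
  RefineSpec A σ0 σU
    (fun u => rhoStat n (hata A u (σ0 u)) (hatb A u (σ0 u))
      (min (tStat n (hata A u (σ0 u)) (hatb A u (σ0 u)))
        (Real.log (2 / ε0)))) σhat

/-- Algorithm 1 with known `a` and `b`. -/
def AlgorithmOneKnown (a b : ℝ) {n k : ℕ} (A : Adj n)
    (σ0 σU : Fin n → Fin n → Fin k) (σhat : Fin n → Fin k) : Prop :=
  RefineSpec A σ0 σU (fun _ => rhoStat n a b (tStat n a b)) σhat

/-- Algorithm 1 with known `a`, `b` and truncated `t_u`. -/
def AlgorithmOneKnownTrunc (a b ε0 : ℝ) {n k : ℕ} (A : Adj n)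
    (σ0 σU : Fin n → Fin n → Fin k) (σhat : Fin n → Fin k) : Prop :=
  RefineSpec A σ0 σU
    (fun _ => rhoStat n a b (min (tStat n a b) (Real.log (2 / ε0)))) σhat

/-- The initializer `σ0 A u` (that is, `σ⁰ᵤ`) only uses the data `A₋ᵤ`. -/
def LocalInit {n k : ℕ} (σ0 : Adj n → Fin n → Fin n → Fin k) : Prop :=
  ∀ (A A' : Adj n) (u : Fin n),
    (∀ v w, v ≠ u → w ≠ u → A v w = A' v w) → σ0 A u = σ0 A' u

/-- Condition 1: the initializer is, with probability at least
`1 − C0 n^{−(1+δ)}`, within misclassification proportion `γ` of the truth,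
uniformly over the parameter space and the left-out node. -/
def Condition1 {n k : ℕ}
    (Θ : Set (Matrix (Fin k) (Fin k) ℝ × (Fin n → Fin k)))
    (σ0 : Adj n → Fin n → Fin n → Fin k) (C0 δ γ : ℝ) : Prop :=
  ∀ p ∈ Θ, ∀ u : Fin n,
    1 - C0 * (n : ℝ) ^ (-(1 + δ)) ≤
      prob (pMat p.1 p.2) { A | misclass p.2 (σ0 A u) ≤ γ }

/-- Degree of a node. -/
def degree {n : ℕ} (A : Adj n) (u : Fin n) : ℝ := ∑ v, aVal A u v

/-- Average degree `d̄`. -/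
def avgDeg {n : ℕ} (A : Adj n) : ℝ := (∑ u, degree A u) / n

/-- Trimming operator `T_τ`: zero out rows/columns of high-degree nodes. -/
def trim {n : ℕ} (A : Adj n) (τ : ℝ) : Matrix (Fin n) (Fin n) ℝ :=
  fun u v => if τ ≤ degree A u ∨ τ ≤ degree A v then 0 else aVal A u v

/-- Regularized adjacency matrix `A_τ = A + (τ/n)·11ᵀ`. -/
def addReg {n : ℕ} (A : Adj n) (τ : ℝ) : Matrix (Fin n) (Fin n) ℝ :=
  fun u v => aVal A u v + τ / n

/-- Normalized Laplacian `L(M)_{uv} = M_{uv}/√(r_u r_v)`. -/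
def lap {n : ℕ} (M : Matrix (Fin n) (Fin n) ℝ) : Matrix (Fin n) (Fin n) ℝ :=
  fun u v => M u v / Real.sqrt ((∑ w, M u w) * (∑ w, M v w))

/-- `U` is a matrix whose columns are orthonormal eigenvectors of `M`
corresponding to the `k` leading (largest in absolute value) eigenvalues. -/
def LeadingEigenvectors {n k : ℕ} (M : Matrix (Fin n) (Fin n) ℝ)
    (U : Matrix (Fin n) (Fin k) ℝ) : Prop :=
  ∃ μ : Fin k → ℝ,
    (∀ i j : Fin k, (∑ u, U u i * U u j) = if i = j then (1 : ℝ) else 0) ∧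
    (∀ j : Fin k, M.mulVec (fun u => U u j) = fun u => μ j * U u j) ∧
    ∀ (x : Fin n → ℝ) (c : ℝ), M.mulVec x = (fun u => c * x u) →
      (∀ j, (∑ u, x u * U u j) = 0) → x ≠ 0 → ∀ j, |c| ≤ |μ j|

/-- Distance between two rows of `U`. -/
def rowDist {n k : ℕ} (U : Matrix (Fin n) (Fin k) ℝ) (v w : Fin n) : ℝ :=
  Real.sqrt (∑ j, (U v j - U w j) ^ 2)

/-- Number of points of `S` within distance `r` of `v`. -/
def ballCount {n k : ℕ} (U : Matrix (Fin n) (Fin k) ℝ) (r : ℝ)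
    (S : Finset (Fin n)) (v : Fin n) : ℕ :=
  (S.filter fun w => rowDist U w v < r).card

/-- Specification of the greedy clustering scheme (Algorithm 2) with critical
radius `r`, applied to the rows of `U`. -/
def GreedyCluster {n k : ℕ} (U : Matrix (Fin n) (Fin k) ℝ) (r : ℝ)
    (σhat : Fin n → Fin k) : Prop :=
  ∃ (S : ℕ → Finset (Fin n)) (t : Fin k → Fin n) (Ch : Fin k → Finset (Fin n)),
    S 0 = Finset.univ ∧
    (∀ i : Fin k,
      ((S i.val).Nonempty → t i ∈ S i.val ∧
        ∀ v ∈ S i.val,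
          ballCount U r (S i.val) v ≤ ballCount U r (S i.val) (t i)) ∧
      Ch i = (S i.val).filter (fun v => rowDist U v (t i) < r) ∧
      S (i.val + 1) = S i.val \ Ch i) ∧
    (∀ i : Fin k, ∀ u ∈ Ch i, σhat u = i) ∧
    ∀ u ∈ S k, ∀ j : Fin k,
      (∑ v ∈ Ch (σhat u), rowDist U u v) / ((Ch (σhat u)).card : ℝ) ≤
        (∑ v ∈ Ch j, rowDist U u v) / ((Ch j).card : ℝ)

/-- `σhat` is a possible output of `USC(τ)` (with tuning constant `μ`). -/
def USCOutput {n k : ℕ} (A : Adj n) (τ μ : ℝ) (σhat : Fin n → Fin k) : Prop :=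
  ∃ U : Matrix (Fin n) (Fin k) ℝ,
    LeadingEigenvectors (trim A τ) U ∧
    GreedyCluster U (μ * Real.sqrt ((k : ℝ) / n)) σhat

/-- `σhat` is a possible output of `NSC(τ)` (with tuning constant `μ`). -/
def NSCOutput {n k : ℕ} (A : Adj n) (τ μ : ℝ) (σhat : Fin n → Fin k) : Prop :=
  ∃ U : Matrix (Fin n) (Fin k) ℝ,
    LeadingEigenvectors (lap (addReg A τ)) U ∧
    GreedyCluster U (μ * Real.sqrt ((k : ℝ) / n)) σhat

/-- The initializer `σ0 A u` is obtained by applying `USC(Cτ · d̄)` to the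
leave-one-out matrix `A₋ᵤ` (identified with a graph on `n − 1` nodes via an
injection `e` avoiding `u`). -/
def USCInitDeg {n k : ℕ} (Cτ μ : ℝ) (σ0 : Adj n → Fin n → Fin n → Fin k) :
    Prop :=
  ∀ (A : Adj n) (u : Fin n), ∃ (m : ℕ) (e : Fin m → Fin n) (s' : Fin m → Fin k),
    m + 1 = n ∧ Function.Injective e ∧ (∀ w, e w ≠ u) ∧
    USCOutput (fun v w => A (e v) (e w))
      (Cτ * avgDeg (fun v w => A (e v) (e w))) μ s' ∧
    ∀ w, σ0 A u (e w) = s' w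

/-- The initializer `σ0 A u` is obtained by applying `NSC(Cτ · d̄)` to `A₋ᵤ`. -/
def NSCInitDeg {n k : ℕ} (Cτ μ : ℝ) (σ0 : Adj n → Fin n → Fin n → Fin k) :
    Prop :=
  ∀ (A : Adj n) (u : Fin n), ∃ (m : ℕ) (e : Fin m → Fin n) (s' : Fin m → Fin k),
    m + 1 = n ∧ Function.Injective e ∧ (∀ w, e w ≠ u) ∧
    NSCOutput (fun v w => A (e v) (e w))
      (Cτ * avgDeg (fun v w => A (e v) (e w))) μ s' ∧
    ∀ w, σ0 A u (e w) = s' w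

/-- The initializer `σ0 A u` is obtained by applying `USC(τ)` (with a fixed
regularization level `τ`) to `A₋ᵤ`. -/
def USCInitTau {n k : ℕ} (τ μ : ℝ) (σ0 : Adj n → Fin n → Fin n → Fin k) :
    Prop :=
  ∀ (A : Adj n) (u : Fin n), ∃ (m : ℕ) (e : Fin m → Fin n) (s' : Fin m → Fin k),
    m + 1 = n ∧ Function.Injective e ∧ (∀ w, e w ≠ u) ∧
    USCOutput (fun v w => A (e v) (e w)) τ μ s' ∧
    ∀ w, σ0 A u (e w) = s' w

/-- The initializer `σ0 A u` is obtained by applying `NSC(τ)` (with a fixed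
regularization level `τ`) to `A₋ᵤ`. -/
def NSCInitTau {n k : ℕ} (τ μ : ℝ) (σ0 : Adj n → Fin n → Fin n → Fin k) :
    Prop :=
  ∀ (A : Adj n) (u : Fin n), ∃ (m : ℕ) (e : Fin m → Fin n) (s' : Fin m → Fin k),
    m + 1 = n ∧ Function.Injective e ∧ (∀ w, e w ≠ u) ∧
    NSCOutput (fun v w => A (e v) (e w)) τ μ s' ∧
    ∀ w, σ0 A u (e w) = s' w

/-- The minimax-rate threshold `exp(−(1−coef)·n·I*/2)` for `k = 2` and
`exp(−(1−coef)·n·I*/(βk))` for `k ≥ 3`. -/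
def rate (β : ℝ) (n k : ℕ) (a b coef : ℝ) : ℝ :=
  if k = 2 then Real.exp (-((1 - coef) * ((n : ℝ) * renyiHalf n a b)) / 2)
  else Real.exp (-((1 - coef) * ((n : ℝ) * renyiHalf n a b)) / (β * k))

/-- `sup_{(B,σ)∈Θ₀} P{ℓ(σ,σ̂) ≥ rate} → 0` as `n → ∞`. -/
def SupSmall0 (β : ℝ) (k : ℕ → ℕ) (a b coef : ℕ → ℝ)
    (σhat : ∀ n, Adj n → Fin n → Fin (k n)) : Prop :=
  ∀ ε' : ℝ, 0 < ε' → ∀ᶠ n in atTop,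
    ∀ p ∈ Theta0 n (k n) (a n) (b n) β,
      prob (pMat p.1 p.2)
        { A | rate β n (k n) (a n) (b n) (coef n) ≤ misclass (σhat n A) p.2 }
        ≤ ε'

/-- `sup_{(B,σ)∈Θ} P{ℓ(σ,σ̂) ≥ rate} → 0` as `n → ∞`. -/
def SupSmallGen (β α : ℝ) (k : ℕ → ℕ) (a b lam coef : ℕ → ℝ)
    (σhat : ∀ n, Adj n → Fin n → Fin (k n)) : Prop :=
  ∀ ε' : ℝ, 0 < ε' → ∀ᶠ n in atTop,
    ∀ p ∈ ThetaGen n (k n) (a n) (b n) (lam n) β α,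
      prob (pMat p.1 p.2)
        { A | rate β n (k n) (a n) (b n) (coef n) ≤ misclass (σhat n A) p.2 }
        ≤ ε'

/-- The running assumption `0 < b < a ≤ (1−ε) n`. -/
def Baseline (ε : ℝ) (n : ℕ) (a b : ℝ) : Prop :=
  0 < b ∧ b < a ∧ a ≤ (1 - ε) * n

/-- `a ≍ b`. -/
def Comparable (a b : ℕ → ℝ) : Prop :=
  ∃ c1 c2 : ℝ, 0 < c1 ∧ ∀ n, c1 * b n ≤ a n ∧ a n ≤ c2 * b n

/-- The constant `C_ε`. -/
def Ceps (ε : ℝ) : ℝ := (10 / 3) * ((2 - ε) / ((ε / 2) * Real.log (2 / ε)))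

/-- The constant `c_ε`. -/
def ceps (ε : ℝ) : ℝ := min (1 / (10 * Ceps ε)) (ε / (2 - ε))

/-- The maximal entry `p_max` of a matrix. -/
def pmax {n : ℕ} (P : Matrix (Fin n) (Fin n) ℝ) : ℝ :=
  sSup { x : ℝ | ∃ u v, x = P u v }

/-- The matrix agreeing with `M` on `J × J` and zero elsewhere. -/
def restrictM {n : ℕ} (M : Matrix (Fin n) (Fin n) ℝ) (J : Finset (Fin n)) :
    Matrix (Fin n) (Fin n) ℝ :=
  fun u v => if u ∈ J ∧ v ∈ J then M u v else 0

/-- The real-valued adjacency matrix. -/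
def adjMat {n : ℕ} (A : Adj n) : Matrix (Fin n) (Fin n) ℝ := fun u v => aVal A u v

end

end SBM

namespace SBM

open Filter

/-!
Vectors that are constant on communities have the form `y ∘ σ`, and there are `k` dimensions of
them once every community is nonempty. On such vectors `P` acts as
`P (y ∘ σ) = (B D y) ∘ σ`, where `D` is the diagonal matrix of community sizes. If all sizes are
at least `m`, then `√m ‖z‖ ≤ ‖z ∘ σ‖` and `√m ‖y ∘ σ‖ ≤ ‖D y‖`, so a lower bound `μ` on the
smallest singular value of `B` becomes the lower bound `m μ` on the `k`-th singular value of `P`.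
Here `B` is `(a - b) / n` times the identity plus `b / n` times the all-ones matrix, a positive
semidefinite perturbation, so `μ = (a - b) / n`; and
`n / (β k) - 1 ≥ n / (2 β k)` when `n ≥ 2 β k`, so `m = n / (2 β k)`.
-/

section

open scoped Matrix

theorem sqnorm_eq_norm_toLp {n : ℕ} (x : Fin n → ℝ) : sqnorm x = ‖WithLp.toLp 2 x‖ := by
  simp only [sqnorm, EuclideanSpace.norm_eq, Real.norm_eq_abs, sq_abs]

theorem sqnorm_pos {n : ℕ} {x : Fin n → ℝ} (hx : x ≠ 0) : 0 < sqnorm x := by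
  rw [sqnorm_eq_norm_toLp]
  exact norm_pos_iff.mpr (by simpa using hx)

theorem mul_sqnorm_le_sqnorm_of_sum_sq_le {m n : ℕ} {x : Fin m → ℝ} {y : Fin n → ℝ} {t : ℝ}
    (h : t ^ 2 * ∑ i, x i ^ 2 ≤ ∑ j, y j ^ 2) : t * sqnorm x ≤ sqnorm y := by
  refine Real.le_sqrt_of_sq_le ?_
  rwa [mul_pow, sqnorm, Real.sq_sqrt (Finset.sum_nonneg fun i _ => sq_nonneg (x i))]

open scoped Matrix.Norms.L2Operator in
theorem sqnorm_mulVec_le {n : ℕ} (M : Matrix (Fin n) (Fin n) ℝ) (x : Fin n → ℝ) :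
    sqnorm (M *ᵥ x) ≤ ‖M‖ * sqnorm x := by
  rw [sqnorm_eq_norm_toLp, sqnorm_eq_norm_toLp]
  exact M.l2_opNorm_mulVec (WithLp.toLp 2 x)

theorem le_kthSingular {n k : ℕ} (hk : 0 < k) {M : Matrix (Fin n) (Fin n) ℝ} {t : ℝ}
    (ht : 0 ≤ t) (V : Submodule ℝ (Fin n → ℝ)) (hV : Module.finrank ℝ V = k)
    (h : ∀ x ∈ V, t * sqnorm x ≤ sqnorm (M *ᵥ x)) : t ≤ kthSingular M k := by
  open scoped Matrix.Norms.L2Operator in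
  refine le_csSup ⟨‖M‖, ?_⟩ ⟨ht, V, hV, h⟩
  rintro s ⟨-, W, hW, hs⟩
  have hW_ne_bot : W ≠ ⊥ := Submodule.one_le_finrank_iff.mp (by omega)
  obtain ⟨x, hxW, hx⟩ := W.exists_mem_ne_zero_of_ne_bot hW_ne_bot
  exact le_of_mul_le_mul_right ((hs x hxW).trans (sqnorm_mulVec_le M x)) (sqnorm_pos hx)

theorem sum_comp_eq_sum_comSize_mul {n k : ℕ} (σ : Fin n → Fin k) (f : Fin k → ℝ) :
    ∑ u, f (σ u) = ∑ i, comSize σ i * f i := by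
  rw [← Finset.sum_fiberwise Finset.univ σ]
  refine Finset.sum_congr rfl fun i _ => ?_
  rw [Finset.sum_congr rfl fun u hu => congrArg f (Finset.mem_filter.mp hu).2,
    Finset.sum_const, nsmul_eq_mul, comSize]

theorem pMat_mulVec_comp {n k : ℕ} (B : Matrix (Fin k) (Fin k) ℝ) (σ : Fin n → Fin k)
    (y : Fin k → ℝ) : pMat B σ *ᵥ (y ∘ σ) = (B *ᵥ (comSize σ * y)) ∘ σ := by
  ext u
  calc ∑ v, B (σ u) (σ v) * y (σ v)
      = ∑ i, comSize σ i * (B (σ u) i * y i) :=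
        sum_comp_eq_sum_comSize_mul σ fun i => B (σ u) i * y i
    _ = ∑ i, B (σ u) i * (comSize σ i * y i) :=
        Finset.sum_congr rfl fun i _ => mul_left_comm _ _ _

theorem surjective_of_comSize_pos {n k : ℕ} {σ : Fin n → Fin k} (h : ∀ i, 0 < comSize σ i) :
    Function.Surjective σ := by
  intro i
  obtain ⟨u, hu⟩ := Finset.card_pos.mp (Nat.cast_pos.mp (h i))
  exact ⟨u, (Finset.mem_filter.mp hu).2⟩

section BalancedLabels

variable {n k : ℕ} {σ : Fin n → Fin k} {m : ℝ}

theorem sqrt_mul_sqnorm_le_sqnorm_comp (hm : 0 ≤ m) (hsize : ∀ i, m ≤ comSize σ i)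
    (z : Fin k → ℝ) : √m * sqnorm z ≤ sqnorm (z ∘ σ) := by
  apply mul_sqnorm_le_sqnorm_of_sum_sq_le
  calc √m ^ 2 * ∑ i, z i ^ 2
      = ∑ i, m * z i ^ 2 := by rw [Real.sq_sqrt hm, Finset.mul_sum]
    _ ≤ ∑ i, comSize σ i * z i ^ 2 := by gcongr with i; exact hsize i
    _ = ∑ u, z (σ u) ^ 2 := (sum_comp_eq_sum_comSize_mul σ fun i => z i ^ 2).symm

theorem sqrt_mul_sqnorm_comp_le_sqnorm_comSize_mul (hm : 0 ≤ m) (hsize : ∀ i, m ≤ comSize σ i)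
    (y : Fin k → ℝ) : √m * sqnorm (y ∘ σ) ≤ sqnorm (comSize σ * y) := by
  apply mul_sqnorm_le_sqnorm_of_sum_sq_le
  calc √m ^ 2 * ∑ u, y (σ u) ^ 2
      = ∑ i, m * (comSize σ i * y i ^ 2) := by
        rw [Real.sq_sqrt hm, sum_comp_eq_sum_comSize_mul σ fun i => y i ^ 2, Finset.mul_sum]
    _ ≤ ∑ i, comSize σ i * (comSize σ i * y i ^ 2) := by
        gcongr with i
        · exact mul_nonneg (Nat.cast_nonneg _) (sq_nonneg _)
        · exact hsize i
    _ = ∑ i, (comSize σ i * y i) ^ 2 := Finset.sum_congr rfl fun i _ => by ring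

variable {B : Matrix (Fin k) (Fin k) ℝ} {μ : ℝ}

theorem mul_sqnorm_comp_le_sqnorm_pMat_mulVec (hm : 0 ≤ m) (hsize : ∀ i, m ≤ comSize σ i)
    (hμ : 0 ≤ μ) (hB : ∀ z, μ * sqnorm z ≤ sqnorm (B *ᵥ z)) (y : Fin k → ℝ) :
    m * μ * sqnorm (y ∘ σ) ≤ sqnorm (pMat B σ *ᵥ (y ∘ σ)) :=
  calc m * μ * sqnorm (y ∘ σ)
      = √m * (μ * (√m * sqnorm (y ∘ σ))) := by
        rw [← Real.mul_self_sqrt hm, Real.sqrt_mul_self (Real.sqrt_nonneg m)]; ring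
    _ ≤ √m * (μ * sqnorm (comSize σ * y)) := by
        gcongr; exact sqrt_mul_sqnorm_comp_le_sqnorm_comSize_mul hm hsize y
    _ ≤ √m * sqnorm (B *ᵥ (comSize σ * y)) := by gcongr; exact hB _
    _ ≤ sqnorm ((B *ᵥ (comSize σ * y)) ∘ σ) := sqrt_mul_sqnorm_le_sqnorm_comp hm hsize _
    _ = sqnorm (pMat B σ *ᵥ (y ∘ σ)) := by rw [pMat_mulVec_comp]

theorem mul_le_kthSingular_pMat (hk : 0 < k) (hm : 0 < m) (hsize : ∀ i, m ≤ comSize σ i)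
    (hμ : 0 ≤ μ) (hB : ∀ z, μ * sqnorm z ≤ sqnorm (B *ᵥ z)) :
    m * μ ≤ kthSingular (pMat B σ) k := by
  have hσ : Function.Surjective σ :=
    surjective_of_comSize_pos fun i => hm.trans_le (hsize i)
  refine le_kthSingular hk (by positivity) (LinearMap.range (LinearMap.funLeft ℝ ℝ σ)) ?_ ?_
  · rw [LinearMap.finrank_range_of_inj (LinearMap.funLeft_injective_of_surjective ℝ ℝ σ hσ),
      Module.finrank_fin_fun]
  · rintro _ ⟨y, rfl⟩
    exact mul_sqnorm_comp_le_sqnorm_pMat_mulVec hm.le hsize hμ hB y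

end BalancedLabels

theorem mulVec_apply_of_diag_of_offDiag {ι R : Type*} [Fintype ι] [Ring R] {B : Matrix ι ι R}
    {p q : R} (hdiag : ∀ i, B i i = p) (hoff : ∀ i j, i ≠ j → B i j = q) (z : ι → R) (i : ι) :
    (B *ᵥ z) i = (p - q) * z i + q * ∑ j, z j := by
  classical
  have hB : B = (p - q) • (1 : Matrix ι ι R) + Matrix.of fun _ _ => q := by
    ext i j
    rcases eq_or_ne i j with rfl | hij
    · simp [hdiag]
    · simp [hoff i j hij, hij]
  rw [hB, Matrix.add_mulVec, Matrix.smul_mulVec, Matrix.one_mulVec, Finset.mul_sum]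
  rfl

theorem sub_mul_sqnorm_le_sqnorm_mulVec_of_diag_of_offDiag {k : ℕ}
    {B : Matrix (Fin k) (Fin k) ℝ} {p q : ℝ} (hdiag : ∀ i, B i i = p)
    (hoff : ∀ i j, i ≠ j → B i j = q) (hq : 0 ≤ q) (hqp : q ≤ p) (z : Fin k → ℝ) :
    (p - q) * sqnorm z ≤ sqnorm (B *ᵥ z) := by
  apply mul_sqnorm_le_sqnorm_of_sum_sq_le
  set S := ∑ j, z j with hS
  calc (p - q) ^ 2 * ∑ i, z i ^ 2
      ≤ (p - q) ^ 2 * ∑ i, z i ^ 2 + (2 * ((p - q) * q) + k * q ^ 2) * S ^ 2 :=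
        le_add_of_nonneg_right <| by
          have := sub_nonneg.mpr hqp
          positivity
    _ = ∑ i, ((p - q) ^ 2 * z i ^ 2 + 2 * ((p - q) * q) * S * z i + (q * S) ^ 2) := by
        rw [Finset.sum_add_distrib, Finset.sum_add_distrib, ← Finset.mul_sum, ← Finset.mul_sum,
          ← hS, Finset.sum_const, Finset.card_univ, Fintype.card_fin, nsmul_eq_mul]
        ring
    _ = ∑ i, (B *ᵥ z) i ^ 2 := Finset.sum_congr rfl fun i _ => by
        rw [mulVec_apply_of_diag_of_offDiag hdiag hoff]
        ring

theorem statement_12_general {n k : ℕ} (hk : 0 < k) {a b β : ℝ} (hβ : 0 < β) (hb : 0 ≤ b)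
    (hba : b ≤ a) {B : Matrix (Fin k) (Fin k) ℝ} {σ : Fin n → Fin k}
    (hsize : ∀ i, (n : ℝ) / (β * k) - 1 ≤ comSize σ i) (hdiag : ∀ i, B i i = a / n)
    (hoff : ∀ i j, i ≠ j → B i j = b / n) (hn : 2 * β * k ≤ n) :
    (a - b) / (2 * β * k) ≤ kthSingular (pMat B σ) k := by
  have hd : 0 < 2 * β * k := by positivity
  have hn_pos : (0 : ℝ) < n := hd.trans_le hn
  have hhalf (i : Fin k) : (n : ℝ) / (2 * β * k) ≤ comSize σ i := by
    have hone : 1 ≤ (n : ℝ) / (2 * β * k) := (one_le_div hd).mpr hn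
    have hdouble : (n : ℝ) / (β * k) = 2 * (n / (2 * β * k)) := by field_simp
    linarith [hsize i]
  have hba_div : b / n ≤ a / n := by gcongr
  calc (a - b) / (2 * β * k) = n / (2 * β * k) * (a / n - b / n) := by field_simp
    _ ≤ kthSingular (pMat B σ) k :=
      mul_le_kthSingular_pMat hk (by positivity) hhalf (sub_nonneg.mpr hba_div)
        (sub_mul_sqnorm_le_sqnorm_mulVec_of_diag_of_offDiag hdiag hoff (by positivity) hba_div)

end

/-- Proposition 1 (lower bound on the k-th singular value of `P` over Θ₀). -/
theorem statement_12
    (n k : ℕ) (a b β : ℝ) (hβ : 1 ≤ β)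
    (hb : 0 < b) (hba : b < a) (han : a ≤ n)
    (B : Matrix (Fin k) (Fin k) ℝ) (σ : Fin n → Fin k)
    (hmem : (B, σ) ∈ Theta0 n k a b β)
    (hn : 2 * β * k ≤ (n : ℝ)) :
    (a - b) / (2 * β * k) ≤ kthSingular (pMat B σ) k := by
  have hn_pos : 0 < n := by exact_mod_cast (hb.trans hba).trans_le han
  exact statement_12_general (σ ⟨0, hn_pos⟩).pos (by linarith) hb.le hba.le
    (fun i => (hmem.1 i).1) hmem.2.1 hmem.2.2 hn

end SBM
end

section
/- Let A ∈ {0,1}^{n×n} be a random symmetric adjacency matrix with zero diagonal such that A_{uv} ~ Bernoulli(P_{uv}) independently for all u > v, where P ∈ [0,1]^{n×n} is symmetric, and set p_max = max over u ≥ v of P_{uv}. For any C' > 0 there exist constants C > 0 and sufficiently large constants C1 < C2 such that, with probability at least 1 − n^{−C'}, simultaneously for all τ ∈ [C1·(n·p_max + 1), C2·(n·p_max + 1)], the operator norm bound ‖T_τ(A) − P‖ ≤ C·√(n·p_max + 1) holds. -/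
open scoped BigOperators
open Filter

namespace SBM

open Filter

/-!
Write `d` for the upper bound `n * pmax P + 1` on the expected degrees. A net of rescaled integer
vectors reduces the operator norm to the bilinear forms `∑ u, ∑ v, z u * w v * (A u v - P u v)`,
in which, after Friedman, Kahn and Szemerédi, small and large products `z u * w v` are treated
separately.

The light pairs, with `|z u * w v|` at most of order `√d`, have an exponential moment small enough
for a union bound over the net. For the heavy pairs no cancellation between `A` and `P` is needed:
`P` alone contributes `O(√d)`, and `A` is bounded using only the discrepancy property, by which no
two sets of nodes span many more edges than expected, and the boundedness of the degrees after
trimming. Sorting coordinates by dyadic scale, discrepancy controls the pairs whose ratio is below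
`√d`, and the degrees control the others. Finally, discrepancy also shows that at most `n / d` nodes
are trimmed, so that the removed rows and columns of `P` contribute only `O(√d)`.
-/

/-! ### The law of the random graph -/

lemma sum_sum_eq_sum_sum_lt_add_sum_diag {ι M : Type*} [Fintype ι] [LinearOrder ι]
    [AddCommMonoid M] (f : ι → ι → M) :
    ∑ u, ∑ v, f u v = (∑ u, ∑ v, if u < v then f u v + f v u else 0) + ∑ u, f u u := by
  have trichotomy (u v : ι) : f u v = (if u < v then f u v else 0) +
      (if v < u then f u v else 0) + if u = v then f u v else 0 := by
    rcases lt_trichotomy u v with h | h | h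
    · simp [h, h.ne, h.not_gt]
    · simp [h]
    · simp [h, h.ne', h.not_gt]
  have swap : ∑ u, ∑ v, (if v < u then f u v else 0) = ∑ u, ∑ v, if u < v then f v u else 0 :=
    Finset.sum_comm
  have merge (u v : ι) : (if u < v then f u v + f v u else 0) =
      (if u < v then f u v else 0) + if u < v then f v u else 0 := by
    split_ifs <;> simp
  conv_lhs => enter [2, u, 2, v]; rw [trichotomy u v]
  simp only [merge, Finset.sum_add_distrib, swap, Finset.sum_ite_eq, Finset.mem_univ, if_true]

lemma prod_prod_ite_lt {ι M : Type*} [Fintype ι] [LinearOrder ι] [CommMonoid M]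
    (f : ι → ι → M) :
    ∏ u, ∏ v, (if u < v then f u v else 1) =
      ∏ e : {e : ι × ι // e.1 < e.2}, f e.1.1 e.1.2 := by
  rw [← Fintype.prod_prod_type' (f := fun u v => if u < v then f u v else 1),
    ← Finset.prod_filter]
  exact Finset.prod_subtype _ (by simp) fun e : ι × ι => f e.1 e.2

/-- Adjacency matrices of simple graphs: the support of the law `weight P`. -/
abbrev IsGraph {n : ℕ} (A : Adj n) : Prop :=
  (∀ u, A u u = false) ∧ (∀ u v, A u v = A v u)

/-- A simple graph encoded by its entries above the diagonal, which are the independent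
coordinates of the law `weight P`. -/
def IsGraph.equivUpper (n : ℕ) :
    {A : Adj n // IsGraph A} ≃ ({e : Fin n × Fin n // e.1 < e.2} → Bool) where
  toFun A e := A.1 e.1.1 e.1.2
  invFun b :=
    ⟨fun u v => if h : u < v then b ⟨(u, v), h⟩ else if h : v < u then b ⟨(v, u), h⟩ else false,
      fun u => by simp, fun u v => by
        rcases lt_trichotomy u v with h | h | h
        · simp [h, h.not_gt]
        · simp [h]
        · simp [h, h.not_gt]⟩
  left_inv := fun ⟨A, hdiag, hsymm⟩ => by
    ext u v
    rcases lt_trichotomy u v with h | rfl | h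
    · simp [h]
    · simp [hdiag u]
    · simp [h, h.not_gt, hsymm u v]
  right_inv b := by
    ext ⟨e, he⟩
    simp [he]

lemma sum_isGraph_prod {R : Type*} [CommSemiring R] {n : ℕ} (g : Fin n → Fin n → Bool → R) :
    ∑ A : Adj n, (if IsGraph A then ∏ u, ∏ v, (if u < v then g u v (A u v) else 1) else 0) =
      ∏ u, ∏ v, if u < v then g u v true + g u v false else 1 := by
  have apply_symm (b : {e : Fin n × Fin n // e.1 < e.2} → Bool) (e) :
      ((IsGraph.equivUpper n).symm b).1 e.1.1 e.1.2 = b e :=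
    congrFun ((IsGraph.equivUpper n).apply_symm_apply b) e
  rw [← Finset.sum_filter, Finset.sum_subtype (p := IsGraph) _ (by simp),
    ← (IsGraph.equivUpper n).symm.sum_comp,
    prod_prod_ite_lt fun u v => g u v true + g u v false]
  simp only [prod_prod_ite_lt fun u v => g u v _, apply_symm, ← Fintype.sum_bool,
    Fintype.prod_sum]

section Law

variable {n : ℕ} {P : Matrix (Fin n) (Fin n) ℝ}

lemma weight_nonneg (hP : ∀ u v, 0 ≤ P u v ∧ P u v ≤ 1) (A : Adj n) : 0 ≤ weight P A := by
  unfold weight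
  split_ifs
  · refine Finset.prod_nonneg fun u _ => Finset.prod_nonneg fun v _ => ?_
    have := hP u v
    split_ifs <;> linarith
  · exact le_rfl

lemma weight_eq_zero_of_not_isGraph {A : Adj n} (hA : ¬ IsGraph A) : weight P A = 0 := if_neg hA

/-- The expectation of `f A`, where `A` is drawn from the law `weight P`. -/
def expect (P : Matrix (Fin n) (Fin n) ℝ) (f : Adj n → ℝ) : ℝ :=
  ∑ A, weight P A * f A

lemma sum_weight (P : Matrix (Fin n) (Fin n) ℝ) : ∑ A, weight P A = 1 := by
  have h := sum_isGraph_prod fun u v b => if b then P u v else 1 - P u v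
  simp only [if_true, Bool.false_eq_true, if_false, add_sub_cancel, ite_self,
    Finset.prod_const_one] at h
  exact h

lemma expect_mul_left (c : ℝ) (f : Adj n → ℝ) :
    expect P (fun A => c * f A) = c * expect P f := by
  simp only [expect, Finset.mul_sum, mul_left_comm]

lemma expect_exp_sum_mul_aVal (P : Matrix (Fin n) (Fin n) ℝ) (b : Fin n → Fin n → ℝ) :
    expect P (fun A => Real.exp (∑ u, ∑ v, b u v * aVal A u v)) =
      ∏ u, ∏ v, if u < v then P u v * Real.exp (b u v + b v u) + (1 - P u v) else 1 := by
  have h := sum_isGraph_prod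
    fun u v e => if e then P u v * Real.exp (b u v + b v u) else 1 - P u v
  simp only [if_true, Bool.false_eq_true, if_false] at h
  rw [← h]
  refine Finset.sum_congr rfl fun A _ => ?_
  by_cases hA : IsGraph A
  · have hdiag : ∑ u, b u u * aVal A u u = 0 :=
      Finset.sum_eq_zero fun u _ => by simp [aVal, hA.1 u]
    unfold weight
    simp only [if_pos hA, sum_sum_eq_sum_sum_lt_add_sum_diag fun u v => b u v * aVal A u v,
      hdiag, add_zero, Real.exp_sum, ← Finset.prod_mul_distrib]
    refine Finset.prod_congr rfl fun u _ => Finset.prod_congr rfl fun v _ => ?_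
    by_cases huv : u < v
    · by_cases hE : A u v <;> simp [huv, aVal, hA.2 v u, hE]
    · simp [huv]
  · rw [weight_eq_zero_of_not_isGraph hA, zero_mul, if_neg hA]

lemma bernoulli_mgf_le {p : ℝ} (hp : 0 ≤ p) (x y : ℝ) :
    p * Real.exp (x + y) + (1 - p) ≤
      Real.exp ((p * (Real.exp (2 * x) - 1) + p * (Real.exp (2 * y) - 1)) / 2) := by
  have amgm : Real.exp (x + y) ≤ (Real.exp (2 * x) + Real.exp (2 * y)) / 2 := by
    rw [Real.exp_add, two_mul, two_mul, Real.exp_add, Real.exp_add]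
    nlinarith [sq_nonneg (Real.exp x - Real.exp y)]
  refine le_trans ?_ (Real.add_one_le_exp _)
  linarith [mul_le_mul_of_nonneg_left amgm hp]

-- Each edge occurs twice in the statistic, which explains the factors `2` and `1 / 2`.
lemma expect_exp_sum_mul_aVal_le (hs : ∀ u v, P u v = P v u)
    (hP : ∀ u v, 0 ≤ P u v ∧ P u v ≤ 1) {b : Fin n → Fin n → ℝ} (hb : ∀ u, 0 ≤ b u u) :
    expect P (fun A => Real.exp (∑ u, ∑ v, b u v * aVal A u v)) ≤
      Real.exp ((∑ u, ∑ v, P u v * (Real.exp (2 * b u v) - 1)) / 2) := by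
  have hdiag : 0 ≤ ∑ u, P u u * (Real.exp (2 * b u u) - 1) :=
    Finset.sum_nonneg fun u _ => mul_nonneg (hP u u).1
      (sub_nonneg.2 (Real.one_le_exp (mul_nonneg zero_le_two (hb u))))
  have hfactor (u v : Fin n) :
      0 ≤ if u < v then P u v * Real.exp (b u v + b v u) + (1 - P u v) else 1 := by
    split_ifs
    · exact add_nonneg (mul_nonneg (hP u v).1 (Real.exp_pos _).le) (sub_nonneg.2 (hP u v).2)
    · exact zero_le_one
  rw [expect_exp_sum_mul_aVal, sum_sum_eq_sum_sum_lt_add_sum_diag]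
  refine le_trans ?_ (Real.exp_le_exp.2
    (div_le_div_of_nonneg_right (le_add_of_nonneg_right hdiag) zero_le_two))
  simp only [Finset.sum_div, Real.exp_sum]
  refine Finset.prod_le_prod (fun u _ => Finset.prod_nonneg fun v _ => hfactor u v)
    fun u _ => Finset.prod_le_prod (fun v _ => hfactor u v) fun v _ => ?_
  split_ifs
  · rw [hs v u]
    exact bernoulli_mgf_le (hP u v).1 _ _
  · simp

lemma prob_mono (hP : ∀ u v, 0 ≤ P u v ∧ P u v ≤ 1) {S T : Set (Adj n)} (h : S ⊆ T) :
    prob P S ≤ prob P T :=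
  Finset.sum_le_sum fun _ _ => Set.indicator_le_indicator_of_subset h (weight_nonneg hP) _

lemma prob_univ (P : Matrix (Fin n) (Fin n) ℝ) : prob P Set.univ = 1 := by
  simpa only [prob, Set.indicator_univ] using sum_weight P

lemma prob_add_prob_sub_one_le_prob_inter (hP : ∀ u v, 0 ≤ P u v ∧ P u v ≤ 1)
    (S T : Set (Adj n)) : prob P S + prob P T - 1 ≤ prob P (S ∩ T) := by
  have h : prob P S + prob P T = prob P (S ∪ T) + prob P (S ∩ T) := by
    simp only [prob, ← Finset.sum_add_distrib, Set.indicator_union_add_inter_apply]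
  have := (prob_mono hP (Set.subset_univ (S ∪ T))).trans_eq (prob_univ P)
  linarith

lemma one_sub_sum_expect_exp_le_prob (hP : ∀ u v, 0 ≤ P u v ∧ P u v ≤ 1) {ι : Type*}
    {s : Finset ι} {f : ι → Adj n → ℝ} {S : Set (Adj n)}
    (hS : ∀ A, IsGraph A → (∀ i ∈ s, f i A ≤ 0) → A ∈ S) :
    1 - ∑ i ∈ s, expect P (fun A => Real.exp (f i A)) ≤ prob P S := by
  simp only [expect, prob]
  rw [Finset.sum_comm, ← sum_weight P, ← Finset.sum_sub_distrib]
  refine Finset.sum_le_sum fun A _ => ?_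
  have hw := weight_nonneg hP A
  have hexp : ∀ i ∈ s, 0 ≤ Real.exp (f i A) := fun i _ => (Real.exp_pos _).le
  rw [← Finset.mul_sum]
  by_cases hA : A ∈ S
  · rw [Set.indicator_of_mem hA]
    exact sub_le_self _ (mul_nonneg hw (Finset.sum_nonneg hexp))
  rw [Set.indicator_of_notMem hA]
  by_cases hG : IsGraph A
  · obtain ⟨i, hi, hpos⟩ : ∃ i ∈ s, 0 < f i A := by
      by_contra! h
      exact hA (hS A hG h)
    have : 1 ≤ ∑ i ∈ s, Real.exp (f i A) :=
      (Real.one_le_exp hpos.le).trans (Finset.single_le_sum hexp hi)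
    exact sub_nonpos.2 (le_mul_of_one_le_right hw this)
  · simp [weight_eq_zero_of_not_isGraph hG]

lemma expect_exp_centered_le (hs : ∀ u v, P u v = P v u)
    (hP : ∀ u v, 0 ≤ P u v ∧ P u v ≤ 1) {b : Fin n → Fin n → ℝ} (hdiag : ∀ u, b u u = 0)
    (hb : ∀ u v, |b u v| ≤ 1 / 2) :
    expect P (fun A => Real.exp (∑ u, ∑ v, b u v * (aVal A u v - P u v))) ≤
      Real.exp (2 * ∑ u, ∑ v, P u v * b u v ^ 2) := by
  have hexp (A : Adj n) : Real.exp (∑ u, ∑ v, b u v * (aVal A u v - P u v)) =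
      Real.exp (-∑ u, ∑ v, b u v * P u v) * Real.exp (∑ u, ∑ v, b u v * aVal A u v) := by
    rw [← Real.exp_add]
    simp only [mul_sub, Finset.sum_sub_distrib]
    ring_nf
  have hquad (u v : Fin n) : P u v * (Real.exp (2 * b u v) - 1) / 2 ≤
      b u v * P u v + 2 * (P u v * b u v ^ 2) := by
    have h : |2 * b u v| ≤ 1 := by
      rw [abs_mul, abs_two]
      linarith [hb u v]
    have := mul_le_mul_of_nonneg_left (abs_le.1 (Real.abs_exp_sub_one_sub_id_le h)).2 (hP u v).1
    linarith
  simp only [hexp, expect_mul_left]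
  refine (mul_le_mul_of_nonneg_left (expect_exp_sum_mul_aVal_le hs hP fun u => (hdiag u).ge)
    (Real.exp_pos _).le).trans ?_
  rw [← Real.exp_add, Real.exp_le_exp, neg_add_le_iff_le_add]
  simp only [Finset.sum_div, Finset.mul_sum, ← Finset.sum_add_distrib]
  exact Finset.sum_le_sum fun u _ => Finset.sum_le_sum fun v _ => hquad u v

lemma expect_exp_edgesBetween_le (hs : ∀ u v, P u v = P v u)
    (hP : ∀ u v, 0 ≤ P u v ∧ P u v ≤ 1) {δ : ℝ} (hδ : ∀ u v, P u v ≤ δ) {θ : ℝ} (hθ : 0 ≤ θ)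
    (I J : Finset (Fin n)) :
    expect P (fun A => Real.exp (θ * edgesBetween A I J)) ≤
      Real.exp (δ * I.card * J.card * Real.exp (2 * θ) / 2) := by
  have hedges (A : Adj n) : θ * edgesBetween A I J =
      ∑ u, ∑ v, (if u ∈ I ∧ v ∈ J then θ else 0) * aVal A u v := by
    simp [edgesBetween, Finset.mul_sum, ite_and, Finset.sum_ite_irrel]
  have hsum : ∑ u, ∑ v, (if u ∈ I ∧ v ∈ J then δ * Real.exp (2 * θ) else 0) =
      δ * I.card * J.card * Real.exp (2 * θ) := by
    simp [ite_and]
    ring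
  simp only [hedges]
  refine (expect_exp_sum_mul_aVal_le hs hP fun u => by split_ifs <;> simp [hθ]).trans ?_
  rw [← hsum]
  gcongr with u _ v _
  split_ifs
  · have := hP u v
    nlinarith [mul_le_mul_of_nonneg_right (hδ u v) (Real.exp_pos (2 * θ)).le]
  · simp

end Law

/-! ### Entropy of sets of nodes -/

/-- An upper bound, linear in `m` with slope `s`, for the logarithm `m log (n / m) + m` of the
number of sets of `m` nodes among `n`; the bound is attained at `m = n e⁻ˢ`. -/
noncomputable def entropyCost (n : ℕ) (s m : ℝ) : ℝ := s * m + n * Real.exp (-s)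

lemma one_add_log_le_entropyCost {n : ℕ} (hn : 1 ≤ n) {s m : ℝ} (hs : 0 ≤ s) (hm : 1 ≤ m) :
    1 + Real.log n ≤ entropyCost n s m := by
  have h := Real.add_one_le_exp (Real.log n - s)
  rw [sub_eq_add_neg, Real.exp_add, Real.exp_log (by exact_mod_cast hn)] at h
  unfold entropyCost
  linarith [le_mul_of_one_le_right hs hm]

lemma sum_exp_neg_entropyCost_le (ι : Type*) [Fintype ι] (s : ℝ) :
    ∑ I : Finset ι, Real.exp (-entropyCost (Fintype.card ι) s I.card) ≤ 1 := by
  have hexp (I : Finset ι) : Real.exp (-entropyCost (Fintype.card ι) s I.card) =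
      Real.exp (-(Fintype.card ι * Real.exp (-s))) *
        (Real.exp (-s) ^ I.card * 1 ^ (Fintype.card ι - I.card)) := by
    rw [one_pow, mul_one, ← Real.exp_nat_mul, ← Real.exp_add, entropyCost]
    ring_nf
  simp only [hexp, ← Finset.mul_sum, Fintype.sum_pow_mul_eq_add_pow]
  calc _ ≤ Real.exp (-(Fintype.card ι * Real.exp (-s))) *
        Real.exp (Real.exp (-s)) ^ Fintype.card ι := by
        gcongr
        exact Real.add_one_le_exp _
    _ = 1 := by rw [← Real.exp_nat_mul, ← Real.exp_add, neg_add_cancel, Real.exp_zero]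

lemma sum_nonempty_exp_neg_mul_entropyCost_le {n : ℕ} (hn : 1 ≤ n) {s K : ℝ} (hs : 0 ≤ s)
    (hK : 1 ≤ K) :
    ∑ I : Finset (Fin n) with I.Nonempty, Real.exp (-(K * entropyCost n s I.card)) ≤
      Real.exp (-((K - 1) * (1 + Real.log n))) := by
  calc ∑ I : Finset (Fin n) with I.Nonempty, Real.exp (-(K * entropyCost n s I.card))
      ≤ ∑ I : Finset (Fin n) with I.Nonempty,
          Real.exp (-((K - 1) * (1 + Real.log n))) * Real.exp (-entropyCost n s I.card) := by
        refine Finset.sum_le_sum fun I hI => ?_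
        rw [← Real.exp_add, Real.exp_le_exp]
        have hcard : (1 : ℝ) ≤ I.card := by exact_mod_cast (Finset.mem_filter.1 hI).2.card_pos
        linarith [mul_le_mul_of_nonneg_left (one_add_log_le_entropyCost hn hs hcard)
          (sub_nonneg.2 hK)]
    _ ≤ ∑ I : Finset (Fin n),
          Real.exp (-((K - 1) * (1 + Real.log n))) * Real.exp (-entropyCost n s I.card) :=
        Finset.sum_le_sum_of_subset_of_nonneg (Finset.filter_subset _ _)
          fun _ _ _ => by positivity
    _ ≤ Real.exp (-((K - 1) * (1 + Real.log n))) := by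
        rw [← Finset.mul_sum]
        refine mul_le_of_le_one_right (Real.exp_pos _).le ?_
        simpa only [Fintype.card_fin] using sum_exp_neg_entropyCost_le (Fin n) s

/-! ### Integer points of Euclidean balls -/

/-- Integer points of the Euclidean ball of radius `4 √n`; after rescaling they form a net of the
unit ball. -/
noncomputable def latticeBall (n : ℕ) : Finset (Fin n → ℤ) :=
  (Fintype.piFinset fun _ => Finset.Icc (-(4 * n : ℤ)) (4 * n)).filter
    fun z => ∑ u, z u ^ 2 ≤ 16 * n

lemma mem_latticeBall {n : ℕ} {z : Fin n → ℤ} :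
    z ∈ latticeBall n ↔ ∑ u, z u ^ 2 ≤ 16 * n := by
  unfold latticeBall
  rw [Finset.mem_filter, Fintype.mem_piFinset, and_iff_right_of_imp]
  intro h u
  have hsq : z u ^ 2 ≤ 16 * n :=
    (Finset.single_le_sum (fun v _ => sq_nonneg (z v)) (Finset.mem_univ u)).trans h
  have hn : (1 : ℤ) ≤ n := by exact_mod_cast u.pos
  rw [Finset.mem_Icc]
  constructor <;> nlinarith

lemma sum_sq_le_of_mem_latticeBall {n : ℕ} {z : Fin n → ℤ} (hz : z ∈ latticeBall n) :
    ∑ u, (z u : ℝ) ^ 2 ≤ 16 * n := by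
  exact_mod_cast mem_latticeBall.1 hz

lemma sum_Icc_half_pow_natAbs (N : ℕ) :
    ∑ k ∈ Finset.Icc (-(N : ℤ)) N, (1 / 2 : ℝ) ^ k.natAbs = 3 - 2 * (1 / 2) ^ N := by
  induction N with
  | zero => norm_num
  | succ N ih =>
    have hsplit : Finset.Icc (-((N + 1 : ℕ) : ℤ)) ((N + 1 : ℕ) : ℤ) =
        insert (-((N + 1 : ℕ) : ℤ)) (insert ((N + 1 : ℕ) : ℤ) (Finset.Icc (-(N : ℤ)) N)) := by
      ext k
      simp only [Finset.mem_Icc, Finset.mem_insert]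
      push_cast
      omega
    rw [hsplit, Finset.sum_insert, Finset.sum_insert, ih, Int.natAbs_neg, Int.natAbs_natCast,
      pow_succ]
    · ring
    · simp
    · simp only [Finset.mem_insert, Finset.mem_Icc]
      push_cast
      omega

-- On the ball `∑ |z u| ≤ ∑ (z u)² ≤ 16 n`, so the weight `2 ^ (16 n - ∑ |z u|)` is at least one;
-- its sum over all integer points factorizes.
lemma card_latticeBall_le (n : ℕ) : ((latticeBall n).card : ℝ) ≤ Real.exp (18 * n) := by
  have hweight : ∀ z ∈ latticeBall n, (1 : ℝ) ≤ 2 ^ (16 * n) * ∏ u, (1 / 2) ^ (z u).natAbs := by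
    intro z hz
    have hsum : ∑ u, (z u).natAbs ≤ 16 * n := by
      have h := (Finset.sum_le_sum fun u _ => Int.natAbs_le_self_sq (z u)).trans
        (mem_latticeBall.1 hz)
      exact_mod_cast h
    rw [Finset.prod_pow_eq_pow_sum, one_div, inv_pow, ← div_eq_mul_inv,
      one_le_div (by positivity)]
    exact pow_le_pow_right₀ one_le_two hsum
  have hcoord : ∑ k ∈ Finset.Icc (-(4 * n : ℤ)) (4 * n), (1 / 2 : ℝ) ^ k.natAbs ≤ 3 := by
    have h := sum_Icc_half_pow_natAbs (4 * n)
    push_cast at h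
    rw [h]
    linarith [show (0 : ℝ) < (1 / 2) ^ (4 * n) by positivity]
  calc ((latticeBall n).card : ℝ) = ∑ _ ∈ latticeBall n, (1 : ℝ) := by simp
    _ ≤ ∑ z ∈ latticeBall n, 2 ^ (16 * n) * ∏ u, (1 / 2 : ℝ) ^ (z u).natAbs :=
        Finset.sum_le_sum hweight
    _ ≤ ∑ z ∈ Fintype.piFinset fun _ : Fin n => Finset.Icc (-(4 * n : ℤ)) (4 * n),
          2 ^ (16 * n) * ∏ u, (1 / 2 : ℝ) ^ (z u).natAbs :=
        Finset.sum_le_sum_of_subset_of_nonneg (Finset.filter_subset _ _)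
          fun _ _ _ => by positivity
    _ = 2 ^ (16 * n) *
          (∑ k ∈ Finset.Icc (-(4 * n : ℤ)) (4 * n), (1 / 2 : ℝ) ^ k.natAbs) ^ n := by
        rw [← Finset.mul_sum,
          Finset.sum_prod_piFinset _ fun (_ : Fin n) k => (1 / 2 : ℝ) ^ Int.natAbs k]
        simp
    _ ≤ Real.exp 1 ^ (16 * n) * Real.exp 2 ^ n := by
        gcongr
        · linarith [Real.add_one_le_exp (1 : ℝ)]
        · linarith [Real.add_one_le_exp (2 : ℝ)]
    _ = Real.exp (18 * n) := by
        rw [← Real.exp_nat_mul, ← Real.exp_nat_mul, ← Real.exp_add]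
        push_cast
        ring_nf

/-! ### Operator norms from a net -/

lemma norm_le_add_of_net {E F : Type*} [NormedAddCommGroup E] [InnerProductSpace ℝ E]
    [NormedAddCommGroup F] [InnerProductSpace ℝ F] (f : E →L[ℝ] F) {s : Set E} {t : Set F}
    {ε T : ℝ} (hs : ∀ x : E, ‖x‖ ≤ 1 → ∃ x' ∈ s, ‖x - x'‖ ≤ ε)
    (ht : ∀ y : F, ‖y‖ ≤ 1 → ∃ y' ∈ t, ‖y - y'‖ ≤ ε) (ht_norm : ∀ y ∈ t, ‖y‖ ≤ 1)
    (hf : ∀ x ∈ s, ∀ y ∈ t, inner ℝ (f x) y ≤ T) : ‖f‖ ≤ T + 2 * ε * ‖f‖ := by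
  have hball (x : E) (y : F) (hx : ‖x‖ ≤ 1) (hy : ‖y‖ ≤ 1) :
      inner ℝ (f x) y ≤ T + 2 * ε * ‖f‖ := by
    obtain ⟨x', hx', hxx'⟩ := hs x hx
    obtain ⟨y', hy', hyy'⟩ := ht y hy
    have hx_error : inner ℝ (f (x - x')) y' ≤ ‖f‖ * ε * 1 :=
      (real_inner_le_norm _ _).trans (mul_le_mul (f.le_opNorm_of_le hxx') (ht_norm y' hy')
        (norm_nonneg _) (mul_nonneg (norm_nonneg _) ((norm_nonneg _).trans hxx')))
    have hy_error : inner ℝ (f x) (y - y') ≤ ‖f‖ * ε :=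
      (real_inner_le_norm _ _).trans
        (mul_le_mul (f.unit_le_opNorm x hx) hyy' (norm_nonneg _) (norm_nonneg _))
    have hsplit : inner ℝ (f x) y =
        inner ℝ (f x') y' + inner ℝ (f (x - x')) y' + inner ℝ (f x) (y - y') := by
      rw [map_sub, inner_sub_left, inner_sub_right]
      ring
    linarith [hf x' hx' y' hy']
  refine f.opNorm_le_of_re_inner_le ?_ fun x y hx hy => hball x y hx.le hy.le
  simpa using hball 0 0 (by simp) (by simp)

lemma exists_int_sq_le_and_sq_sub_le_one (t : ℝ) :
    ∃ k : ℤ, (k : ℝ) ^ 2 ≤ t ^ 2 ∧ (t - k) ^ 2 ≤ 1 := by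
  rcases le_total 0 t with ht | ht
  · have hfloor : (0 : ℝ) ≤ ⌊t⌋ := by exact_mod_cast Int.floor_nonneg.2 ht
    refine ⟨⌊t⌋, pow_le_pow_left₀ hfloor (Int.floor_le t) 2, ?_⟩
    nlinarith [Int.floor_le t, Int.lt_floor_add_one t]
  · have hceil : (⌈t⌉ : ℝ) ≤ 0 := by exact_mod_cast Int.ceil_le.2 (by simpa using ht)
    refine ⟨⌈t⌉, ?_, ?_⟩ <;> nlinarith [Int.le_ceil t, Int.ceil_lt_add_one t]

/-- The point of the Euclidean unit ball represented by an element of `latticeBall n`. -/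
noncomputable def latticePoint {n : ℕ} (z : Fin n → ℤ) : EuclideanSpace ℝ (Fin n) :=
  WithLp.toLp 2 fun u => z u / (4 * √n)

lemma latticePoint_apply {n : ℕ} (z : Fin n → ℤ) (u : Fin n) :
    latticePoint z u = z u / (4 * √n) := rfl

lemma norm_latticePoint_le {n : ℕ} {z : Fin n → ℤ} (hz : z ∈ latticeBall n) :
    ‖latticePoint z‖ ≤ 1 := by
  rw [← sq_le_one_iff₀ (norm_nonneg _), EuclideanSpace.real_norm_sq_eq]
  simp only [latticePoint_apply, div_pow, mul_pow, Real.sq_sqrt (Nat.cast_nonneg n),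
    ← Finset.sum_div]
  refine div_le_one_of_le₀ ?_ (by positivity)
  linarith [sum_sq_le_of_mem_latticeBall hz]

lemma exists_mem_latticeBall_norm_sub_le {n : ℕ} {x : EuclideanSpace ℝ (Fin n)} (hx : ‖x‖ ≤ 1) :
    ∃ z ∈ latticeBall n, ‖x - latticePoint z‖ ≤ 1 / 4 := by
  rcases n.eq_zero_or_pos with rfl | hn
  · exact ⟨0, by simp [mem_latticeBall], by
      rw [Subsingleton.elim (x - latticePoint 0) 0]
      norm_num⟩
  have hn0 : (0 : ℝ) < n := by exact_mod_cast hn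
  have hsq : (4 * √(n : ℝ)) ^ 2 = 16 * n := by
    rw [mul_pow, Real.sq_sqrt hn0.le]
    norm_num
  choose k hk hk_near using fun u => exists_int_sq_le_and_sq_sub_le_one (4 * √n * x u)
  refine ⟨k, mem_latticeBall.2 ?_, ?_⟩
  · have : ∑ u, (k u : ℝ) ^ 2 ≤ 16 * n :=
      calc ∑ u, (k u : ℝ) ^ 2 ≤ ∑ u, (4 * √n * x u) ^ 2 := Finset.sum_le_sum fun u _ => hk u
        _ = 16 * n * ‖x‖ ^ 2 := by
            simp only [mul_pow _ (x _), hsq, ← Finset.mul_sum, EuclideanSpace.real_norm_sq_eq]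
        _ ≤ 16 * n := mul_le_of_le_one_right (by positivity) (pow_le_one₀ (norm_nonneg _) hx)
    exact_mod_cast this
  · rw [← sq_le_sq₀ (norm_nonneg _) (by norm_num), EuclideanSpace.real_norm_sq_eq]
    calc ∑ u, (x - latticePoint k) u ^ 2 = ∑ u, (4 * √n * x u - k u) ^ 2 / (16 * n) := by
          refine Finset.sum_congr rfl fun u _ => ?_
          rw [← hsq, ← div_pow, sub_div, mul_div_cancel_left₀ _ (by positivity), PiLp.sub_apply,
            latticePoint_apply]
      _ ≤ ∑ u : Fin n, 1 / (16 * (n : ℝ)) := by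
          gcongr with u
          exact hk_near u
      _ = (1 / 4) ^ 2 := by
          simp only [Finset.sum_const, Finset.card_univ, Fintype.card_fin, nsmul_eq_mul]
          field_simp
          norm_num

lemma inner_toEuclideanCLM_latticePoint {n : ℕ} (M : Matrix (Fin n) (Fin n) ℝ)
    (z w : Fin n → ℤ) :
    inner ℝ (Matrix.toEuclideanCLM (n := Fin n) (𝕜 := ℝ) M (latticePoint w)) (latticePoint z) =
      (∑ u, ∑ v, (z u : ℝ) * w v * M u v) / (16 * n) := by
  rw [real_inner_comm, Matrix.inner_toEuclideanCLM]
  simp only [dotProduct, Matrix.mulVec, Finset.mul_sum, Finset.sum_div]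
  refine Finset.sum_congr rfl fun u _ => Finset.sum_congr rfl fun v _ => ?_
  have hsq : 16 * (n : ℝ) = 4 * √n * (4 * √n) := by
    rw [mul_mul_mul_comm, Real.mul_self_sqrt (Nat.cast_nonneg n)]
    norm_num
  rw [hsq, latticePoint_apply, latticePoint_apply]
  ring

lemma opNorm_le_norm_toEuclideanCLM {n : ℕ} (M : Matrix (Fin n) (Fin n) ℝ) :
    opNorm M ≤ ‖Matrix.toEuclideanCLM (n := Fin n) (𝕜 := ℝ) M‖ := by
  have hnorm (x : Fin n → ℝ) : sqnorm x = ‖WithLp.toLp 2 x‖ := by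
    simp [sqnorm, EuclideanSpace.norm_eq]
  refine Real.sSup_le ?_ (norm_nonneg _)
  rintro t ⟨x, hx, rfl⟩
  rw [hnorm] at hx ⊢
  rw [← Matrix.toEuclideanCLM_toLp]
  exact ContinuousLinearMap.unit_le_opNorm _ _ hx.le

lemma opNorm_le_of_forall_latticeBall {n : ℕ} (hn : 1 ≤ n) {M : Matrix (Fin n) (Fin n) ℝ} {T : ℝ}
    (hM : ∀ z ∈ latticeBall n, ∀ w ∈ latticeBall n, ∑ u, ∑ v, (z u : ℝ) * w v * M u v ≤ T * n) :
    opNorm M ≤ T / 8 := by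
  have hn0 : (0 : ℝ) < n := by exact_mod_cast hn
  have hnet (x : EuclideanSpace ℝ (Fin n)) (hx : ‖x‖ ≤ 1) :
      ∃ y ∈ latticePoint '' (latticeBall n : Set (Fin n → ℤ)), ‖x - y‖ ≤ 1 / 4 := by
    simpa using exists_mem_latticeBall_norm_sub_le hx
  have h := norm_le_add_of_net (Matrix.toEuclideanCLM (n := Fin n) (𝕜 := ℝ) M) (T := T / 16)
    hnet hnet (Set.forall_mem_image.2 fun z hz => norm_latticePoint_le hz)
    (Set.forall_mem_image.2 fun w hw => Set.forall_mem_image.2 fun z hz => by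
      rw [inner_toEuclideanCLM_latticePoint,
        div_le_div_iff₀ (mul_pos (by norm_num) hn0) (by norm_num)]
      linarith [hM z hz w hw])
  linarith [opNorm_le_norm_toEuclideanCLM M]

/-! ### Light and heavy pairs of coordinates -/

/-- The dyadic scale of an integer: `scale k = i` means `2 ^ i ≤ |k| < 2 ^ (i + 1)`, except that
`0` has scale `0`, like `±1`. -/
def scale (k : ℤ) : ℕ := Nat.log 2 k.natAbs

lemma two_pow_scale_le_abs {k : ℤ} (hk : k ≠ 0) : (2 : ℝ) ^ scale k ≤ |(k : ℝ)| := by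
  have h := Nat.pow_log_le_self 2 (Int.natAbs_ne_zero.2 hk)
  rw [← Int.cast_abs, ← Nat.cast_natAbs]
  exact_mod_cast h

lemma abs_le_two_mul_two_pow_scale (k : ℤ) : |(k : ℝ)| ≤ 2 * 2 ^ scale k := by
  have h := (Nat.lt_pow_succ_log_self one_lt_two k.natAbs).le
  rw [pow_succ'] at h
  rw [← Int.cast_abs, ← Nat.cast_natAbs]
  exact_mod_cast h

lemma four_pow_scale_le (k : ℤ) : (4 : ℝ) ^ scale k ≤ 1 + (k : ℝ) ^ 2 := by
  rcases eq_or_ne k 0 with rfl | hk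
  · simp [scale]
  · calc (4 : ℝ) ^ scale k = (2 ^ scale k) ^ 2 := by rw [← pow_mul, mul_comm, pow_mul]; norm_num
      _ ≤ |(k : ℝ)| ^ 2 := pow_le_pow_left₀ (by positivity) (two_pow_scale_le_abs hk) 2
      _ ≤ 1 + (k : ℝ) ^ 2 := by rw [sq_abs]; linarith

lemma abs_mul_le_four_mul_two_pow (a b : ℤ) :
    |(a * b : ℝ)| ≤ 4 * 2 ^ (scale a + scale b) :=
  calc |(a * b : ℝ)| = |(a : ℝ)| * |(b : ℝ)| := abs_mul _ _
    _ ≤ 2 * 2 ^ scale a * (2 * 2 ^ scale b) :=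
        mul_le_mul (abs_le_two_mul_two_pow_scale a) (abs_le_two_mul_two_pow_scale b)
          (abs_nonneg _) (by positivity)
    _ = 4 * 2 ^ (scale a + scale b) := by rw [pow_add]; ring

/-- The coefficients `z u * w v` of the off-diagonal light pairs, those with `|z u * w v|` at most
of order `2 ^ q`. -/
def lightPart {n : ℕ} (q : ℕ) (z w : Fin n → ℤ) (u v : Fin n) : ℝ :=
  if u ≠ v ∧ scale (z u) + scale (w v) ≤ q then z u * w v else 0

lemma lightPart_self {n : ℕ} (q : ℕ) (z w : Fin n → ℤ) (u : Fin n) : lightPart q z w u u = 0 :=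
  if_neg fun h => h.1 rfl

lemma abs_lightPart_le {n : ℕ} (q : ℕ) (z w : Fin n → ℤ) (u v : Fin n) :
    |lightPart q z w u v| ≤ 4 * 2 ^ q := by
  unfold lightPart
  split_ifs with h
  · exact (abs_mul_le_four_mul_two_pow _ _).trans
      (mul_le_mul_of_nonneg_left (pow_le_pow_right₀ one_le_two h.2) (by norm_num))
  · rw [abs_zero]
    positivity

lemma lightPart_sq_le {n : ℕ} (q : ℕ) (z w : Fin n → ℤ) (u v : Fin n) :
    lightPart q z w u v ^ 2 ≤ (z u : ℝ) ^ 2 * (w v : ℝ) ^ 2 := by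
  unfold lightPart
  split_ifs
  · exact (mul_pow _ _ _).le
  · rw [zero_pow two_ne_zero]
    positivity

lemma sum_sum_sq_mul_sq_le {n : ℕ} {z w : Fin n → ℤ} (hz : z ∈ latticeBall n)
    (hw : w ∈ latticeBall n) :
    ∑ u, ∑ v, (z u : ℝ) ^ 2 * (w v : ℝ) ^ 2 ≤ 256 * n ^ 2 :=
  calc ∑ u, ∑ v, (z u : ℝ) ^ 2 * (w v : ℝ) ^ 2 = (∑ u, (z u : ℝ) ^ 2) * ∑ v, (w v : ℝ) ^ 2 :=
        (Finset.sum_mul_sum _ _ _ _).symm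
    _ ≤ 16 * n * (16 * n) :=
        mul_le_mul (sum_sq_le_of_mem_latticeBall hz) (sum_sq_le_of_mem_latticeBall hw)
          (Finset.sum_nonneg fun _ _ => sq_nonneg _) (by positivity)
    _ = 256 * n ^ 2 := by ring

lemma abs_mul_le_sq_div_of_lt_scale_add_scale {q : ℕ} {a b : ℤ} (h : q < scale a + scale b) :
    |(a * b : ℝ)| ≤ (a : ℝ) ^ 2 * (b : ℝ) ^ 2 / 2 ^ q := by
  rcases eq_or_ne a 0 with rfl | ha
  · simp
  rcases eq_or_ne b 0 with rfl | hb
  · simp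
  have hlarge : (2 : ℝ) ^ q ≤ |(a * b : ℝ)| :=
    calc (2 : ℝ) ^ q ≤ 2 ^ (scale a + scale b) := pow_le_pow_right₀ one_le_two h.le
      _ = 2 ^ scale a * 2 ^ scale b := pow_add _ _ _
      _ ≤ |(a : ℝ)| * |(b : ℝ)| :=
          mul_le_mul (two_pow_scale_le_abs ha) (two_pow_scale_le_abs hb) (by positivity)
            (abs_nonneg _)
      _ = |(a * b : ℝ)| := (abs_mul _ _).symm
  rw [le_div_iff₀ (by positivity), ← mul_pow, ← sq_abs, sq]
  exact mul_le_mul_of_nonneg_left hlarge (abs_nonneg _)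

lemma abs_mul_le_sq_div_of_scale_add_le {q : ℕ} {a b : ℤ} (h : scale b + q ≤ scale a) :
    |(a * b : ℝ)| ≤ 2 * (a : ℝ) ^ 2 / 2 ^ q := by
  rcases eq_or_ne a 0 with rfl | ha
  · simp
  rw [le_div_iff₀ (by positivity), abs_mul]
  calc |(a : ℝ)| * |(b : ℝ)| * 2 ^ q ≤ |(a : ℝ)| * (2 * 2 ^ scale b) * 2 ^ q := by
        gcongr
        exact abs_le_two_mul_two_pow_scale b
    _ = 2 * |(a : ℝ)| * 2 ^ (scale b + q) := by rw [pow_add]; ring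
    _ ≤ 2 * |(a : ℝ)| * 2 ^ scale a := by
        gcongr
        exact one_le_two
    _ ≤ 2 * |(a : ℝ)| * |(a : ℝ)| := by
        gcongr
        exact two_pow_scale_le_abs ha
    _ = 2 * (a : ℝ) ^ 2 := by rw [mul_assoc, abs_mul_abs_self, sq]

/-- Scales `i`, `j` of coordinates whose product exceeds `2 ^ q` although their ratio is below
`2 ^ q`: discrepancy controls such pairs, and the node degrees control all other heavy pairs. -/
abbrev Balanced (q i j : ℕ) : Prop := q < i + j ∧ i < j + q ∧ j < i + q

lemma balanced_comm (q i j : ℕ) : Balanced q i j ↔ Balanced q j i := by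
  unfold Balanced
  lia

/-- The value `2 ^ (i + j)` at balanced scales `i`, `j`, and `0` at all others. -/
noncomputable def balancedProduct (q i j : ℕ) : ℝ := if Balanced q i j then 2 ^ (i + j) else 0

/-- An upper bound for the product of a heavy pair of coordinates; its first two terms are summed
by means of the node degrees, the third one by means of discrepancy. -/
noncomputable def heavyBound (q : ℕ) (a b : ℤ) : ℝ :=
  2 * (a : ℝ) ^ 2 / 2 ^ q + 2 * (b : ℝ) ^ 2 / 2 ^ q + 4 * balancedProduct q (scale a) (scale b)

lemma balancedProduct_nonneg (q i j : ℕ) : 0 ≤ balancedProduct q i j := by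
  unfold balancedProduct
  split_ifs <;> positivity

lemma heavyBound_nonneg (q : ℕ) (a b : ℤ) : 0 ≤ heavyBound q a b := by
  have := balancedProduct_nonneg q (scale a) (scale b)
  unfold heavyBound
  positivity

lemma abs_mul_le_heavyBound {q : ℕ} {a b : ℤ} (h : q < scale a + scale b) :
    |(a * b : ℝ)| ≤ heavyBound q a b := by
  have ha : 0 ≤ 2 * (a : ℝ) ^ 2 / 2 ^ q := by positivity
  have hb : 0 ≤ 2 * (b : ℝ) ^ 2 / 2 ^ q := by positivity
  unfold heavyBound balancedProduct
  split_ifs with hbal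
  · linarith [abs_mul_le_four_mul_two_pow a b]
  · rw [mul_zero, add_zero]
    rcases le_or_gt (scale b + q) (scale a) with hab | hab
    · linarith [abs_mul_le_sq_div_of_scale_add_le hab]
    · have hba : scale a + q ≤ scale b := not_lt.1 fun hlt => hbal ⟨h, hab, hlt⟩
      rw [mul_comm (a : ℝ)]
      linarith [abs_mul_le_sq_div_of_scale_add_le hba]

/-! ### Discrepancy and concentration of the light pairs -/

/-- The discrepancy property of a graph: no two sets of nodes span many more edges than expected
at edge probability `d / n`. The exponential moment parameter `r / 4` and the entropy slopes
`3 * i`, `3 * j` only range over grids, so that the union bound is finite. -/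
def HasDiscrepancy {n : ℕ} (d K : ℝ) (A : Adj n) : Prop :=
  ∀ i ≤ 8 * n, ∀ j ≤ 8 * n, ∀ r ≤ 8 * n, ∀ I J : Finset (Fin n), I.Nonempty → J.Nonempty →
    (r / 4 : ℝ) * edgesBetween A I J ≤ d / n * I.card * J.card * Real.exp (2 * (r / 4)) / 2 +
      K * (entropyCost n (3 * i) I.card + entropyCost n (3 * j) J.card)

/-- Concentration of the light parts of all bilinear forms in `A - P`. -/
def LightConcentrated {n : ℕ} (P : Matrix (Fin n) (Fin n) ℝ) (q : ℕ) (K : ℝ) (A : Adj n) : Prop :=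
  ∀ z ∈ latticeBall n, ∀ w ∈ latticeBall n,
    ∑ u, ∑ v, lightPart q z w u v * (aVal A u v - P u v) ≤ 8 * 2 ^ q * ((44 + K) * n)

section Events

variable {n : ℕ} {P : Matrix (Fin n) (Fin n) ℝ}

lemma sum_expect_exp_edgesBetween_sub_le (hn : 1 ≤ n) (hs : ∀ u v, P u v = P v u)
    (hP : ∀ u v, 0 ≤ P u v ∧ P u v ≤ 1) {δ : ℝ} (hδ : ∀ u v, P u v ≤ δ) {θ : ℝ} (hθ : 0 ≤ θ)
    {s t K : ℝ} (hs_nonneg : 0 ≤ s) (ht_nonneg : 0 ≤ t) (hK : 1 ≤ K) :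
    ∑ I : Finset (Fin n) with I.Nonempty, ∑ J : Finset (Fin n) with J.Nonempty,
      expect P (fun A => Real.exp (θ * edgesBetween A I J -
        (δ * I.card * J.card * Real.exp (2 * θ) / 2 +
          K * (entropyCost n s I.card + entropyCost n t J.card)))) ≤
      Real.exp (-(2 * (K - 1) * (1 + Real.log n))) := by
  have hpair (I J : Finset (Fin n)) : expect P (fun A => Real.exp (θ * edgesBetween A I J -
        (δ * I.card * J.card * Real.exp (2 * θ) / 2 +
          K * (entropyCost n s I.card + entropyCost n t J.card)))) ≤
      Real.exp (-(K * entropyCost n s I.card)) * Real.exp (-(K * entropyCost n t J.card)) := by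
    simp only [sub_eq_neg_add, Real.exp_add _ (θ * _), expect_mul_left]
    refine (mul_le_mul_of_nonneg_left (expect_exp_edgesBetween_le hs hP hδ hθ I J)
      (Real.exp_pos _).le).trans_eq ?_
    rw [← Real.exp_add, ← Real.exp_add]
    ring_nf
  refine (Finset.sum_le_sum fun I _ => Finset.sum_le_sum fun J _ => hpair I J).trans ?_
  rw [← Finset.sum_mul_sum]
  refine (mul_le_mul (sum_nonempty_exp_neg_mul_entropyCost_le hn hs_nonneg hK)
    (sum_nonempty_exp_neg_mul_entropyCost_le hn ht_nonneg hK)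
    (Finset.sum_nonneg fun _ _ => (Real.exp_pos _).le) (Real.exp_pos _).le).trans_eq ?_
  rw [← Real.exp_add]
  ring_nf

lemma natCast_eight_mul_add_one_le_exp (hn : 1 ≤ n) :
    ((8 * n + 1 : ℕ) : ℝ) ≤ Real.exp (4 * (1 + Real.log n)) := by
  have hn_one : (1 : ℝ) ≤ n := by exact_mod_cast hn
  calc ((8 * n + 1 : ℕ) : ℝ) ≤ 9 * n := by push_cast; linarith
    _ ≤ Real.exp 4 * Real.exp (Real.log n) := by
        rw [Real.exp_log (by positivity)]
        gcongr
        linarith [Real.quadratic_le_exp_of_nonneg (x := 4) (by norm_num)]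
    _ ≤ Real.exp (4 * (1 + Real.log n)) := by
        rw [← Real.exp_add, Real.exp_le_exp]
        linarith [Real.log_nonneg hn_one]

lemma one_sub_exp_le_prob_hasDiscrepancy (hn : 1 ≤ n) (hs : ∀ u v, P u v = P v u)
    (hP : ∀ u v, 0 ≤ P u v ∧ P u v ≤ 1) {d K : ℝ} (hd : ∀ u v, P u v ≤ d / n) (hK : 1 ≤ K) :
    1 - Real.exp (-(2 * (K - 7) * (1 + Real.log n))) ≤
      prob P {A | IsGraph A ∧ HasDiscrepancy d K A} := by
  set grid := Finset.range (8 * n + 1) with hgrid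
  set sets := Finset.univ.filter fun I : Finset (Fin n) => I.Nonempty with hsets
  have h := one_sub_sum_expect_exp_le_prob hP
    (s := (grid ×ˢ grid ×ˢ grid) ×ˢ sets ×ˢ sets) (S := {A | IsGraph A ∧ HasDiscrepancy d K A})
    (f := fun ⟨⟨i, j, r⟩, I, J⟩ A => (r / 4 : ℝ) * edgesBetween A I J -
      (d / n * I.card * J.card * Real.exp (2 * (r / 4)) / 2 +
        K * (entropyCost n (3 * i) I.card + entropyCost n (3 * j) J.card)))
    fun A hA hf => ⟨hA, fun i hi j hj r hr I J hI hJ => sub_nonpos.1 <|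
      hf ((i, j, r), I, J) (by simp [hgrid, hsets, hi, hj, hr, hI, hJ])⟩
  refine (sub_le_sub_left ?_ 1).trans h
  rw [Finset.sum_product]
  calc _ ≤ ∑ _ ∈ grid ×ˢ grid ×ˢ grid, Real.exp (-(2 * (K - 1) * (1 + Real.log n))) := by
        refine Finset.sum_le_sum fun x _ => ?_
        rw [Finset.sum_product]
        exact sum_expect_exp_edgesBetween_sub_le hn hs hP hd (by positivity) (by positivity)
          (by positivity) hK
    _ = ((8 * n + 1 : ℕ) : ℝ) ^ 3 * Real.exp (-(2 * (K - 1) * (1 + Real.log n))) := by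
        rw [Finset.sum_const, Finset.card_product, Finset.card_product, Finset.card_range,
          nsmul_eq_mul]
        push_cast
        ring
    _ ≤ Real.exp (4 * (1 + Real.log n)) ^ 3 * Real.exp (-(2 * (K - 1) * (1 + Real.log n))) := by
        gcongr
        exact natCast_eight_mul_add_one_le_exp hn
    _ = Real.exp (-(2 * (K - 7) * (1 + Real.log n))) := by
        rw [← Real.exp_nat_mul, ← Real.exp_add]
        push_cast
        ring_nf

lemma sum_sum_mul_lightPart_sq_le (hn : 1 ≤ n) {d : ℝ} (hd : ∀ u v, P u v ≤ d / n) {q : ℕ}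
    (hq : d ≤ 4 ^ q) {z w : Fin n → ℤ} (hz : z ∈ latticeBall n) (hw : w ∈ latticeBall n) :
    ∑ u, ∑ v, P u v * lightPart q z w u v ^ 2 ≤ 256 * 4 ^ q * n :=
  calc ∑ u, ∑ v, P u v * lightPart q z w u v ^ 2
      ≤ ∑ u, ∑ v, (4 ^ q / n : ℝ) * ((z u : ℝ) ^ 2 * (w v : ℝ) ^ 2) := by
        refine Finset.sum_le_sum fun u _ => Finset.sum_le_sum fun v _ => ?_
        exact mul_le_mul ((hd u v).trans (by gcongr)) (lightPart_sq_le q z w u v) (sq_nonneg _)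
          (by positivity)
    _ = (4 ^ q / n : ℝ) * ∑ u, ∑ v, (z u : ℝ) ^ 2 * (w v : ℝ) ^ 2 := by simp only [Finset.mul_sum]
    _ ≤ (4 ^ q / n : ℝ) * (256 * n ^ 2) := by
        gcongr
        exact sum_sum_sq_mul_sq_le hz hw
    _ = 256 * 4 ^ q * n := by field_simp

lemma expect_exp_light_le (hn : 1 ≤ n) (hs : ∀ u v, P u v = P v u)
    (hP : ∀ u v, 0 ≤ P u v ∧ P u v ≤ 1) {d : ℝ} (hd : ∀ u v, P u v ≤ d / n) {q : ℕ}
    (hq : d ≤ 4 ^ q) {z w : Fin n → ℤ} (hz : z ∈ latticeBall n) (hw : w ∈ latticeBall n) :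
    expect P (fun A => Real.exp
      ((∑ u, ∑ v, lightPart q z w u v * (aVal A u v - P u v)) / (8 * 2 ^ q))) ≤
      Real.exp (8 * n) := by
  have hbound (u v : Fin n) : |lightPart q z w u v / (8 * 2 ^ q)| ≤ 1 / 2 := by
    rw [abs_div, abs_of_pos (by positivity : (0 : ℝ) < 8 * 2 ^ q), div_le_iff₀ (by positivity)]
    linarith [abs_lightPart_le q z w u v]
  have hmoment := expect_exp_centered_le hs hP
    (b := fun u v => lightPart q z w u v / (8 * 2 ^ q)) (fun u => by simp [lightPart_self]) hbound
  simp only [div_mul_eq_mul_div, ← Finset.sum_div] at hmoment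
  refine hmoment.trans (Real.exp_le_exp.2 ?_)
  have hfour : (8 * 2 ^ q : ℝ) ^ 2 = 64 * 4 ^ q := by
    rw [mul_pow, ← pow_mul, mul_comm q, pow_mul]
    norm_num
  simp only [div_pow, ← mul_div_assoc, ← Finset.sum_div, hfour]
  rw [div_le_iff₀ (by positivity)]
  linarith [sum_sum_mul_lightPart_sq_le hn hd hq hz hw]

lemma one_sub_exp_le_prob_lightConcentrated (hn : 1 ≤ n) (hs : ∀ u v, P u v = P v u)
    (hP : ∀ u v, 0 ≤ P u v ∧ P u v ≤ 1) {d : ℝ} (hd : ∀ u v, P u v ≤ d / n) {q : ℕ}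
    (hq : d ≤ 4 ^ q) (K : ℝ) :
    1 - Real.exp (-(K * n)) ≤ prob P {A | LightConcentrated P q K A} := by
  have h := one_sub_sum_expect_exp_le_prob hP
    (s := latticeBall n ×ˢ latticeBall n) (S := {A | LightConcentrated P q K A})
    (f := fun x A => -((44 + K) * n) +
      (∑ u, ∑ v, lightPart q x.1 x.2 u v * (aVal A u v - P u v)) / (8 * 2 ^ q))
    fun A _ hf z hz w hw => (div_le_iff₀' (by positivity)).1 <|
      neg_add_nonpos_iff.1 (hf (z, w) (Finset.mk_mem_product hz hw))
  refine (sub_le_sub_left ?_ 1).trans h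
  calc _ ≤ ∑ _ ∈ latticeBall n ×ˢ latticeBall n,
        Real.exp (-((44 + K) * n)) * Real.exp (8 * n) := by
        refine Finset.sum_le_sum fun x hx => ?_
        obtain ⟨hz, hw⟩ := Finset.mem_product.1 hx
        simp only [Real.exp_add, expect_mul_left]
        gcongr
        exact expect_exp_light_le hn hs hP hd hq hz hw
    _ = (latticeBall n).card * (latticeBall n).card *
          (Real.exp (-((44 + K) * n)) * Real.exp (8 * n)) := by
        rw [Finset.sum_const, Finset.card_product, nsmul_eq_mul]
        push_cast
        ring
    _ ≤ Real.exp (18 * n) * Real.exp (18 * n) *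
          (Real.exp (-((44 + K) * n)) * Real.exp (8 * n)) := by
        gcongr <;> exact card_latticeBall_le n
    _ = Real.exp (-(K * n)) := by
        simp only [← Real.exp_add]
        ring_nf

lemma one_sub_rpow_le_prob_hasDiscrepancy_and_lightConcentrated (hn : 1 ≤ n)
    (hs : ∀ u v, P u v = P v u) (hP : ∀ u v, 0 ≤ P u v ∧ P u v ≤ 1) {d : ℝ}
    (hd : ∀ u v, P u v ≤ d / n) {q : ℕ} (hq : d ≤ 4 ^ q) {c : ℝ} (hc : 0 ≤ c) :
    1 - (n : ℝ) ^ (-c) ≤ prob P ({A | IsGraph A ∧ HasDiscrepancy d (c + 12) A} ∩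
      {A | LightConcentrated P q (c + 12) A}) := by
  have hn_pos : (0 : ℝ) < n := by exact_mod_cast hn
  have hlog : 0 ≤ Real.log n := Real.log_natCast_nonneg n
  have hlog_le : c * Real.log n ≤ c * n :=
    mul_le_mul_of_nonneg_left (Real.log_le_self hn_pos.le) hc
  have hdisc : Real.exp (-(2 * (c + 12 - 7) * (1 + Real.log n))) ≤
      Real.exp (-(1 + c * Real.log n)) := by
    rw [Real.exp_le_exp]
    linarith [mul_nonneg hc hlog]
  have hlight : Real.exp (-((c + 12) * n)) ≤ Real.exp (-(1 + c * Real.log n)) := by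
    have hn_one : (1 : ℝ) ≤ n := by exact_mod_cast hn
    rw [Real.exp_le_exp]
    linarith
  have hhalf : Real.exp (-(1 + c * Real.log n)) ≤ (n : ℝ) ^ (-c) / 2 := by
    rw [Real.rpow_def_of_pos hn_pos, neg_add, Real.exp_add, div_eq_inv_mul, Real.exp_neg 1,
      mul_neg, mul_comm c]
    gcongr
    linarith [Real.add_one_le_exp (1 : ℝ)]
  linarith [prob_add_prob_sub_one_le_prob_inter hP
      {A | IsGraph A ∧ HasDiscrepancy d (c + 12) A} {A | LightConcentrated P q (c + 12) A},
    one_sub_exp_le_prob_hasDiscrepancy hn hs hP hd (by linarith : 1 ≤ c + 12),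
    one_sub_exp_le_prob_lightConcentrated hn hs hP hd hq (c + 12)]

end Events

/-! ### Sums over dyadic scales -/

lemma sum_Icc_two_pow_div_le (m : ℕ) :
    ∑ r ∈ Finset.Icc 1 m, (2 : ℝ) ^ r / r ≤ 4 * 2 ^ m / m := by
  rcases Nat.lt_or_ge m 2 with hm | hm
  · interval_cases m <;> norm_num
  · induction m, hm using Nat.le_induction with
    | base => norm_num [Finset.sum_Icc_succ_top]
    | succ m hm ih =>
      rw [Finset.sum_Icc_succ_top (by lia)]
      refine (add_le_add_left ih _).trans ?_
      have hm' : (2 : ℝ) ≤ m := by exact_mod_cast hm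
      have hpow : (0 : ℝ) < 2 ^ m := by positivity
      push_cast
      rw [div_add_div _ _ (by positivity) (by positivity),
        div_le_div_iff₀ (by positivity) (by positivity), pow_succ]
      nlinarith [mul_nonneg hpow.le (by nlinarith : (0 : ℝ) ≤ (m + 1) * (2 * m - 4))]

/-- The weight `2 ^ r / r`, `r = i + j - q`, with which the entropy of two sets of nodes at balanced
scales `i`, `j` enters the bound for the heavy pairs. -/
noncomputable def balancedWeight (q i j : ℕ) : ℝ :=
  if Balanced q i j then 2 ^ (i + j - q) / (i + j - q : ℕ) else 0

lemma balancedWeight_comm (q i j : ℕ) : balancedWeight q i j = balancedWeight q j i := by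
  simp only [balancedWeight, balanced_comm q i j, add_comm i j]

lemma sum_balancedWeight_le (q i N : ℕ) :
    ∑ j ∈ Finset.range N, balancedWeight q i j ≤ 2 * 4 ^ i / i := by
  calc ∑ j ∈ Finset.range N, balancedWeight q i j
      = ∑ j ∈ Finset.range N with Balanced q i j, (2 : ℝ) ^ (i + j - q) / (i + j - q : ℕ) :=
        (Finset.sum_filter _ _).symm
    _ = ∑ r ∈ ((Finset.range N).filter (Balanced q i)).image (fun j => i + j - q),
          (2 : ℝ) ^ r / r := by
        rw [Finset.sum_image]
        intro j hj j' hj' h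
        simp only [Finset.coe_filter, Set.mem_ofPred_eq] at hj hj'
        dsimp only at h
        lia
    _ ≤ ∑ r ∈ Finset.Icc 1 (2 * i), (2 : ℝ) ^ r / r := by
        refine Finset.sum_le_sum_of_subset_of_nonneg (fun r hr => ?_) fun _ _ _ => by positivity
        obtain ⟨j, hj, rfl⟩ := Finset.mem_image.1 hr
        have := (Finset.mem_filter.1 hj).2
        rw [Finset.mem_Icc]
        lia
    _ ≤ 4 * 2 ^ (2 * i) / (2 * i : ℕ) := sum_Icc_two_pow_div_le _
    _ = 2 * 4 ^ i / i := by
        rw [pow_mul]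
        push_cast
        rw [show (4 : ℝ) * (2 ^ 2) ^ i = 2 * (2 * 4 ^ i) by norm_num; ring,
          mul_div_mul_left _ _ two_ne_zero]

lemma entropyCost_nonneg (n : ℕ) {s m : ℝ} (hs : 0 ≤ s) (hm : 0 ≤ m) : 0 ≤ entropyCost n s m := by
  unfold entropyCost
  positivity

lemma entropyCost_mul_two_mul_four_pow_div_le (n i : ℕ) {m : ℝ} (hm : 0 ≤ m) :
    entropyCost n (3 * i) m * (2 * 4 ^ i / i) ≤ 6 * (m * 4 ^ i) + 2 * n * (1 / 2) ^ i := by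
  rcases i.eq_zero_or_pos with rfl | hi
  · rw [Nat.cast_zero, div_zero, mul_zero]
    positivity
  have hexp : Real.exp (-(3 * i)) * 4 ^ i ≤ (1 / 2) ^ i := by
    have hexp_three : Real.exp (-3) ≤ 1 / 8 := by
      rw [Real.exp_neg, ← one_div]
      exact one_div_le_one_div_of_le (by norm_num)
        (by linarith [Real.quadratic_le_exp_of_nonneg (x := 3) (by norm_num)])
    rw [show -(3 * (i : ℝ)) = i * -3 by ring, Real.exp_nat_mul, ← mul_pow]
    exact pow_le_pow_left₀ (by positivity) (by linarith) i
  unfold entropyCost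
  calc _ = 6 * (m * 4 ^ i) + 2 * n * (Real.exp (-(3 * i)) * 4 ^ i) / i := by
        field_simp
        ring
    _ ≤ 6 * (m * 4 ^ i) + 2 * n * (Real.exp (-(3 * i)) * 4 ^ i) := by
        gcongr
        exact div_le_self (by positivity) (by exact_mod_cast hi)
    _ ≤ 6 * (m * 4 ^ i) + 2 * n * (1 / 2) ^ i := by gcongr

section Level

variable {n : ℕ} {z w : Fin n → ℤ}

/-- The nodes at which an integer vector has a given dyadic scale. -/
def level (z : Fin n → ℤ) (i : ℕ) : Finset (Fin n) :=
  Finset.univ.filter fun u => scale (z u) = i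

lemma scale_eq_of_mem_level {i : ℕ} {u : Fin n} (hu : u ∈ level z i) : scale (z u) = i :=
  (Finset.mem_filter.1 hu).2

lemma scale_le_of_mem_latticeBall (hz : z ∈ latticeBall n) (u : Fin n) :
    scale (z u) ≤ 4 * n := by
  have hsq : z u ^ 2 ≤ 16 * n :=
    (Finset.single_le_sum (fun v _ => sq_nonneg (z v)) (Finset.mem_univ u)).trans
      (mem_latticeBall.1 hz)
  have hn : (1 : ℤ) ≤ n := by exact_mod_cast u.pos
  have habs : |z u| ≤ 4 * n := abs_le_of_sq_le_sq (by nlinarith) (by positivity)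
  rw [Int.abs_eq_natAbs] at habs
  exact (Nat.log_le_self _ _).trans (by lia)

lemma sum_eq_sum_sum_level (hz : z ∈ latticeBall n) (f : Fin n → ℝ) :
    ∑ u, f u = ∑ i ∈ Finset.range (4 * n + 1), ∑ u ∈ level z i, f u :=
  (Finset.sum_fiberwise_of_maps_to (fun u _ =>
    Finset.mem_range.2 (Nat.lt_succ_of_le (scale_le_of_mem_latticeBall hz u))) f).symm

lemma sum_sum_mul_aVal_eq_sum_sum_level (hz : z ∈ latticeBall n) (hw : w ∈ latticeBall n)
    (A : Adj n) (g : ℕ → ℕ → ℝ) :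
    ∑ u, ∑ v, g (scale (z u)) (scale (w v)) * aVal A u v =
      ∑ i ∈ Finset.range (4 * n + 1), ∑ j ∈ Finset.range (4 * n + 1),
        g i j * edgesBetween A (level z i) (level w j) := by
  rw [sum_eq_sum_sum_level hz]
  refine Finset.sum_congr rfl fun i _ => ?_
  simp only [sum_eq_sum_sum_level hw]
  rw [Finset.sum_comm]
  refine Finset.sum_congr rfl fun j _ => ?_
  simp only [edgesBetween, Finset.mul_sum]
  refine Finset.sum_congr rfl fun u hu => Finset.sum_congr rfl fun v hv => ?_
  rw [scale_eq_of_mem_level hu, scale_eq_of_mem_level hv]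

lemma sum_card_level_mul_four_pow_le (hz : z ∈ latticeBall n) :
    ∑ i ∈ Finset.range (4 * n + 1), (level z i).card * (4 : ℝ) ^ i ≤ 17 * n :=
  calc ∑ i ∈ Finset.range (4 * n + 1), (level z i).card * (4 : ℝ) ^ i
      = ∑ u, (4 : ℝ) ^ scale (z u) := by
        rw [sum_eq_sum_sum_level hz]
        refine Finset.sum_congr rfl fun i _ => ?_
        rw [Finset.sum_congr rfl fun u hu => by rw [scale_eq_of_mem_level hu], Finset.sum_const,
          nsmul_eq_mul]
    _ ≤ ∑ u, (1 + (z u : ℝ) ^ 2) := Finset.sum_le_sum fun u _ => four_pow_scale_le (z u)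
    _ ≤ 17 * n := by
        rw [Finset.sum_add_distrib, Finset.sum_const, Finset.card_univ, Fintype.card_fin,
          nsmul_eq_mul]
        linarith [sum_sq_le_of_mem_latticeBall hz]

lemma sum_sum_entropyCost_mul_balancedWeight_le (hz : z ∈ latticeBall n) (q N : ℕ) :
    ∑ i ∈ Finset.range (4 * n + 1), ∑ j ∈ Finset.range N,
      entropyCost n (3 * i) (level z i).card * balancedWeight q i j ≤ 106 * n := by
  have hgeom : ∑ i ∈ Finset.range (4 * n + 1), (1 / 2 : ℝ) ^ i ≤ 2 := sum_geometric_two_le _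
  calc _ ≤ ∑ i ∈ Finset.range (4 * n + 1),
        (6 * ((level z i).card * (4 : ℝ) ^ i) + 2 * n * (1 / 2) ^ i) := by
        refine Finset.sum_le_sum fun i _ => ?_
        rw [← Finset.mul_sum]
        exact (mul_le_mul_of_nonneg_left (sum_balancedWeight_le q i N)
          (entropyCost_nonneg n (by positivity) (Nat.cast_nonneg _))).trans
          (entropyCost_mul_two_mul_four_pow_div_le n i (Nat.cast_nonneg _))
    _ ≤ 6 * (17 * n) + 2 * n * 2 := by
        rw [Finset.sum_add_distrib, ← Finset.mul_sum, ← Finset.mul_sum]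
        gcongr
        exact sum_card_level_mul_four_pow_le hz
    _ = 106 * n := by ring

lemma sum_sum_entropyCost_mul_balancedWeight_le' (hw : w ∈ latticeBall n) (q N : ℕ) :
    ∑ i ∈ Finset.range N, ∑ j ∈ Finset.range (4 * n + 1),
      entropyCost n (3 * j) (level w j).card * balancedWeight q i j ≤ 106 * n := by
  rw [Finset.sum_comm]
  simpa only [balancedWeight_comm q _] using sum_sum_entropyCost_mul_balancedWeight_le hw q N

end Level

/-! ### Bilinear forms in the centered adjacency matrix -/

section Form

variable {n : ℕ} {A : Adj n} {d K : ℝ} {q : ℕ} {z w : Fin n → ℤ}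

lemma aVal_nonneg (A : Adj n) (u v : Fin n) : 0 ≤ aVal A u v := by
  unfold aVal
  split_ifs <;> norm_num

lemma exp_two_mul_div_four_le (r : ℕ) : Real.exp (2 * (r / 4)) ≤ 2 ^ r := by
  have hhalf : Real.exp (1 / 2) ≤ 2 := by
    have hsq : Real.exp (1 / 2) * Real.exp (1 / 2) = Real.exp 1 := by
      rw [← Real.exp_add]
      norm_num
    nlinarith [Real.exp_one_lt_d9, Real.exp_pos (1 / 2)]
  calc Real.exp (2 * (r / 4)) = Real.exp (1 / 2) ^ r := by
        rw [← Real.exp_nat_mul]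
        ring_nf
    _ ≤ 2 ^ r := pow_le_pow_left₀ (Real.exp_pos _).le hhalf r

lemma HasDiscrepancy.edgesBetween_le (hA : HasDiscrepancy d K A) (hd : 0 ≤ d) (hK : 0 ≤ K)
    {i j r : ℕ} (hi : i ≤ 8 * n) (hj : j ≤ 8 * n) (hr : r ≤ 8 * n) (hr_pos : 0 < r)
    (I J : Finset (Fin n)) :
    edgesBetween A I J ≤ 4 / r * (d / n * I.card * J.card * 2 ^ r / 2 +
      K * (entropyCost n (3 * i) I.card + entropyCost n (3 * j) J.card)) := by
  have hcost (k : ℕ) (S : Finset (Fin n)) : 0 ≤ entropyCost n (3 * k) S.card :=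
    entropyCost_nonneg n (by positivity) (Nat.cast_nonneg _)
  have hI := hcost i I
  have hJ := hcost j J
  rcases I.eq_empty_or_nonempty with rfl | hI_ne
  · simp only [edgesBetween, Finset.sum_empty]
    positivity
  rcases J.eq_empty_or_nonempty with rfl | hJ_ne
  · simp only [edgesBetween, Finset.sum_empty, Finset.sum_const_zero]
    positivity
  calc edgesBetween A I J = 4 / r * (r / 4 * edgesBetween A I J) := by field_simp
    _ ≤ 4 / r * (d / n * I.card * J.card * Real.exp (2 * (r / 4)) / 2 +
        K * (entropyCost n (3 * i) I.card + entropyCost n (3 * j) J.card)) :=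
        mul_le_mul_of_nonneg_left (hA i hi j hj r hr I J hI_ne hJ_ne) (by positivity)
    _ ≤ _ := by
        gcongr
        exact exp_two_mul_div_four_le r

lemma HasDiscrepancy.balancedProduct_mul_edgesBetween_le (hA : HasDiscrepancy d K A) (hd : 0 ≤ d)
    (hK : 0 ≤ K) (hq : d ≤ 4 ^ q) {i j : ℕ} (hi : i ≤ 4 * n) (hj : j ≤ 4 * n)
    (I J : Finset (Fin n)) :
    balancedProduct q i j * edgesBetween A I J ≤
      2 ^ q * (2 / n * ((I.card * 4 ^ i) * (J.card * 4 ^ j)) +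
        4 * K * (entropyCost n (3 * i) I.card * balancedWeight q i j +
          entropyCost n (3 * j) J.card * balancedWeight q i j)) := by
  unfold balancedProduct balancedWeight
  split_ifs with hij
  swap
  · simp only [zero_mul, mul_zero, add_zero]
    positivity
  obtain ⟨r, hr⟩ : ∃ r, i + j = q + r := ⟨i + j - q, by lia⟩
  have hr_pos : 0 < r := by lia
  have hr_one : (1 : ℝ) ≤ r := by exact_mod_cast hr_pos
  have hscales : (4 : ℝ) ^ q * (2 ^ r) ^ 2 = 4 ^ i * 4 ^ j := by
    rw [← pow_add, hr, pow_add, ← pow_mul, mul_comm r, pow_mul]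
    norm_num
  rw [hr, Nat.add_sub_cancel_left, pow_add, mul_assoc]
  refine mul_le_mul_of_nonneg_left ?_ (by positivity)
  have he := hA.edgesBetween_le hd hK (by lia : i ≤ 8 * n) (by lia : j ≤ 8 * n)
    (by lia : r ≤ 8 * n) hr_pos I J
  set a : ℝ := (I.card : ℝ)
  set b : ℝ := (J.card : ℝ)
  set c := entropyCost n (3 * i) a + entropyCost n (3 * j) b with hc
  calc 2 ^ r * edgesBetween A I J ≤ 2 ^ r * (4 / r * (d / n * a * b * 2 ^ r / 2 + K * c)) := by
        gcongr
    _ ≤ 2 ^ r * (4 / r * (4 ^ q / n * a * b * 2 ^ r / 2 + K * c)) := by gcongr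
    _ = 2 / n * (a * b * (4 ^ q * (2 ^ r) ^ 2)) / r + 4 * K * (c * (2 ^ r / r)) := by ring
    _ ≤ 2 / n * (a * b * (4 ^ q * (2 ^ r) ^ 2)) + 4 * K * (c * (2 ^ r / r)) := by
        gcongr
        exact div_le_self (by positivity) hr_one
    _ = _ := by
        rw [hscales, hc]
        ring

lemma HasDiscrepancy.sum_sum_balancedProduct_mul_aVal_le (hA : HasDiscrepancy d K A) (hd : 0 ≤ d)
    (hK : 0 ≤ K) (hq : d ≤ 4 ^ q) (hz : z ∈ latticeBall n) (hw : w ∈ latticeBall n) :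
    ∑ u, ∑ v, balancedProduct q (scale (z u)) (scale (w v)) * aVal A u v ≤
      (578 + 848 * K) * (n * 2 ^ q) := by
  set R := Finset.range (4 * n + 1)
  have hle {i : ℕ} (hi : i ∈ R) : i ≤ 4 * n := Nat.lt_succ_iff.1 (Finset.mem_range.1 hi)
  have hcard := mul_le_mul (sum_card_level_mul_four_pow_le hz) (sum_card_level_mul_four_pow_le hw)
    (Finset.sum_nonneg fun _ _ => by positivity) (by positivity)
  have hcost := add_le_add (sum_sum_entropyCost_mul_balancedWeight_le hz q (4 * n + 1))
    (sum_sum_entropyCost_mul_balancedWeight_le' hw q (4 * n + 1))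
  calc _ ≤ ∑ i ∈ R, ∑ j ∈ R, 2 ^ q *
        (2 / n * (((level z i).card * 4 ^ i) * ((level w j).card * 4 ^ j)) +
          4 * K * (entropyCost n (3 * i) (level z i).card * balancedWeight q i j +
            entropyCost n (3 * j) (level w j).card * balancedWeight q i j)) := by
        rw [sum_sum_mul_aVal_eq_sum_sum_level hz hw]
        exact Finset.sum_le_sum fun i hi => Finset.sum_le_sum fun j hj =>
          hA.balancedProduct_mul_edgesBetween_le hd hK hq (hle hi) (hle hj) _ _
    _ = 2 ^ q * (2 / n * ((∑ i ∈ R, (level z i).card * (4 : ℝ) ^ i) *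
          ∑ j ∈ R, (level w j).card * (4 : ℝ) ^ j) +
        4 * K * (∑ i ∈ R, ∑ j ∈ R, entropyCost n (3 * i) (level z i).card * balancedWeight q i j +
          ∑ i ∈ R, ∑ j ∈ R, entropyCost n (3 * j) (level w j).card * balancedWeight q i j)) := by
        rw [Finset.sum_mul_sum]
        simp only [← Finset.mul_sum, Finset.sum_add_distrib]
    _ ≤ 2 ^ q * (2 / n * ((17 * n) * (17 * n)) + 4 * K * (106 * n + 106 * n)) := by
        exact mul_le_mul_of_nonneg_left (add_le_add
          (mul_le_mul_of_nonneg_left hcard (by positivity))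
          (mul_le_mul_of_nonneg_left hcost (by positivity))) (by positivity)
    _ = _ := by
        rcases n.eq_zero_or_pos with rfl | hn
        · simp
        · field_simp
          ring

lemma sum_sum_sq_mul_aVal_le (hz : z ∈ latticeBall n) {D : ℝ} (hD : 0 ≤ D)
    (hdeg : ∀ u, z u ≠ 0 → degree A u ≤ D) :
    ∑ u, ∑ v, (z u : ℝ) ^ 2 * aVal A u v ≤ 16 * n * D :=
  calc ∑ u, ∑ v, (z u : ℝ) ^ 2 * aVal A u v = ∑ u, (z u : ℝ) ^ 2 * degree A u := by
        simp only [degree, Finset.mul_sum]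
    _ ≤ ∑ u, (z u : ℝ) ^ 2 * D := by
        refine Finset.sum_le_sum fun u _ => ?_
        rcases eq_or_ne (z u) 0 with hu | hu
        · simp [hu]
        · exact mul_le_mul_of_nonneg_left (hdeg u hu) (sq_nonneg _)
    _ = (∑ u, (z u : ℝ) ^ 2) * D := (Finset.sum_mul _ _ _).symm
    _ ≤ 16 * n * D := mul_le_mul_of_nonneg_right (sum_sq_le_of_mem_latticeBall hz) hD

lemma sum_sum_heavyBound_mul_aVal_le (hA_graph : IsGraph A) (hA : HasDiscrepancy d K A)
    (hd : 0 ≤ d) (hK : 0 ≤ K) (hq : d ≤ 4 ^ q) {B : ℝ} (hB : 0 ≤ B) (hz : z ∈ latticeBall n)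
    (hw : w ∈ latticeBall n) (hz_deg : ∀ u, z u ≠ 0 → degree A u ≤ B * 4 ^ q)
    (hw_deg : ∀ v, w v ≠ 0 → degree A v ≤ B * 4 ^ q) :
    ∑ u, ∑ v, heavyBound q (z u) (w v) * aVal A u v ≤
      (64 * B + 2312 + 3392 * K) * (n * 2 ^ q) := by
  have hfour : (4 : ℝ) ^ q = 2 ^ q * 2 ^ q := by
    rw [← mul_pow]
    norm_num
  have hsymm (u v : Fin n) : aVal A u v = aVal A v u := by rw [aVal, aVal, hA_graph.2]
  calc ∑ u, ∑ v, heavyBound q (z u) (w v) * aVal A u v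
      = 2 / 2 ^ q * ∑ u, ∑ v, (z u : ℝ) ^ 2 * aVal A u v +
        2 / 2 ^ q * ∑ v, ∑ u, (w v : ℝ) ^ 2 * aVal A v u +
        4 * ∑ u, ∑ v, balancedProduct q (scale (z u)) (scale (w v)) * aVal A u v := by
        rw [Finset.sum_comm (f := fun v u => (w v : ℝ) ^ 2 * aVal A v u)]
        simp only [Finset.mul_sum, ← Finset.sum_add_distrib]
        refine Finset.sum_congr rfl fun u _ => Finset.sum_congr rfl fun v _ => ?_
        rw [heavyBound, hsymm v u]
        ring
    _ ≤ 2 / 2 ^ q * (16 * n * (B * 4 ^ q)) + 2 / 2 ^ q * (16 * n * (B * 4 ^ q)) +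
        4 * ((578 + 848 * K) * (n * 2 ^ q)) := by
        gcongr
        · exact sum_sum_sq_mul_aVal_le hz (by positivity) hz_deg
        · exact sum_sum_sq_mul_aVal_le hw (by positivity) hw_deg
        · exact hA.sum_sum_balancedProduct_mul_aVal_le hd hK hq hz hw
    _ = _ := by
        rw [hfour]
        field_simp
        ring

lemma mul_mul_sub_le_of_lt_scale_add_scale {a b : ℤ} (h : q < scale a + scale b) {x p δ : ℝ}
    (hx : 0 ≤ x) (hp : 0 ≤ p) (hpδ : p ≤ δ) :
    (a * b : ℝ) * (x - p) ≤
      heavyBound q a b * x + δ / 2 ^ q * ((a : ℝ) ^ 2 * (b : ℝ) ^ 2) :=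
  calc (a * b : ℝ) * (x - p) = a * b * x + p * -(a * b) := by ring
    _ ≤ |(a * b : ℝ)| * x + p * |(a * b : ℝ)| :=
        add_le_add (mul_le_mul_of_nonneg_right (le_abs_self _) hx)
          (mul_le_mul_of_nonneg_left (neg_le_abs _) hp)
    _ ≤ heavyBound q a b * x + δ * ((a : ℝ) ^ 2 * (b : ℝ) ^ 2 / 2 ^ q) :=
        add_le_add (mul_le_mul_of_nonneg_right (abs_mul_le_heavyBound h) hx)
          (mul_le_mul hpδ (abs_mul_le_sq_div_of_lt_scale_add_scale h) (abs_nonneg _)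
            (hp.trans hpδ))
    _ = _ := by ring

lemma neg_mul_le_add_sq_div_two {p : ℝ} (hp : 0 ≤ p) (hp' : p ≤ 1) (a b : ℝ) :
    -(a * b * p) ≤ (a ^ 2 + b ^ 2) / 2 := by
  nlinarith [mul_nonneg hp (sq_nonneg (a + b)),
    mul_nonneg (sub_nonneg.2 hp') (add_nonneg (sq_nonneg a) (sq_nonneg b))]

variable {P : Matrix (Fin n) (Fin n) ℝ}

lemma mul_mul_aVal_sub_le (hP : ∀ u v, 0 ≤ P u v ∧ P u v ≤ 1) {δ : ℝ} (hδ : ∀ u v, P u v ≤ δ)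
    (hA : ∀ u, A u u = false) (q : ℕ) (z w : Fin n → ℤ) (u v : Fin n) :
    (z u : ℝ) * w v * (aVal A u v - P u v) ≤
      lightPart q z w u v * (aVal A u v - P u v) +
      (if u = v then ((z u : ℝ) ^ 2 + (w v : ℝ) ^ 2) / 2 else 0) +
      heavyBound q (z u) (w v) * aVal A u v + δ / 2 ^ q * ((z u : ℝ) ^ 2 * (w v : ℝ) ^ 2) := by
  have hx := aVal_nonneg A u v
  have hδ_nonneg : 0 ≤ δ := (hP u v).1.trans (hδ u v)
  have hheavy : 0 ≤ heavyBound q (z u) (w v) * aVal A u v := mul_nonneg (heavyBound_nonneg _ _ _) hx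
  have hsq : 0 ≤ δ / 2 ^ q * ((z u : ℝ) ^ 2 * (w v : ℝ) ^ 2) := by positivity
  rcases eq_or_ne u v with rfl | huv
  · have hloop : aVal A u u = 0 := by simp [aVal, hA u]
    have hdiag := neg_mul_le_add_sq_div_two (hP u u).1 (hP u u).2 (z u) (w u)
    rw [lightPart_self, if_pos rfl]
    rw [hloop] at hheavy ⊢
    linarith
  rw [if_neg huv]
  rcases le_or_gt (scale (z u) + scale (w v)) q with hlight | hgt
  · rw [lightPart, if_pos ⟨huv, hlight⟩]
    linarith
  · rw [lightPart, if_neg fun h => hgt.not_ge h.2, zero_mul, zero_add, zero_add]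
    exact mul_mul_sub_le_of_lt_scale_add_scale hgt hx (hP u v).1 (hδ u v)

lemma sum_sum_mul_mul_aVal_sub_le (hn : 1 ≤ n) (hP : ∀ u v, 0 ≤ P u v ∧ P u v ≤ 1)
    (hd : ∀ u v, P u v ≤ d / n) (hd_nonneg : 0 ≤ d) (hK : 0 ≤ K) (hq : d ≤ 4 ^ q)
    (hA_graph : IsGraph A) (hA : HasDiscrepancy d K A) (hA_light : LightConcentrated P q K A)
    {B : ℝ} (hB : 0 ≤ B) (hz : z ∈ latticeBall n) (hw : w ∈ latticeBall n)
    (hz_deg : ∀ u, z u ≠ 0 → degree A u ≤ B * 4 ^ q)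
    (hw_deg : ∀ v, w v ≠ 0 → degree A v ≤ B * 4 ^ q) :
    ∑ u, ∑ v, (z u : ℝ) * w v * (aVal A u v - P u v) ≤
      (64 * B + 3400 * K + 2936) * ((n : ℝ) * 2 ^ q) := by
  have hn_pos : (0 : ℝ) < n := by exact_mod_cast hn
  have hdiag : ∑ u, ∑ v, (if u = v then ((z u : ℝ) ^ 2 + (w v : ℝ) ^ 2) / 2 else 0) ≤
      16 * ((n : ℝ) * 2 ^ q) := by
    simp only [Finset.sum_ite_eq, Finset.mem_univ, if_true]
    rw [← Finset.sum_div, Finset.sum_add_distrib]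
    nlinarith [sum_sq_le_of_mem_latticeBall hz, sum_sq_le_of_mem_latticeBall hw,
      mul_le_mul_of_nonneg_left (one_le_pow₀ one_le_two : (1 : ℝ) ≤ 2 ^ q) hn_pos.le]
  have hsq : ∑ u, ∑ v, d / n / 2 ^ q * ((z u : ℝ) ^ 2 * (w v : ℝ) ^ 2) ≤
      256 * ((n : ℝ) * 2 ^ q) := by
    simp only [← Finset.mul_sum _ _ (d / n / 2 ^ q)]
    calc _ ≤ 4 ^ q / n / 2 ^ q * (256 * (n : ℝ) ^ 2) := by
          gcongr
          exact sum_sum_sq_mul_sq_le hz hw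
      _ = _ := by
          rw [show (4 : ℝ) = 2 * 2 by norm_num, mul_pow]
          field_simp
  have hheavy := sum_sum_heavyBound_mul_aVal_le hA_graph hA hd_nonneg hK hq hB hz hw hz_deg hw_deg
  refine (Finset.sum_le_sum fun u _ => Finset.sum_le_sum fun v _ =>
    mul_mul_aVal_sub_le hP hd hA_graph.1 q z w u v).trans ?_
  simp only [Finset.sum_add_distrib]
  linarith [hA_light z hz w hw]

end Form

/-! ### Trimming -/

section Trim

variable {n : ℕ} {A : Adj n} {P : Matrix (Fin n) (Fin n) ℝ} {d K τ : ℝ} {q : ℕ} {z w : Fin n → ℤ}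

/-- The nodes whose rows and columns are zeroed out by `trim A τ`. -/
noncomputable def trimmedNodes (A : Adj n) (τ : ℝ) : Finset (Fin n) :=
  Finset.univ.filter fun u => τ ≤ degree A u

lemma mem_trimmedNodes {u : Fin n} : u ∈ trimmedNodes A τ ↔ τ ≤ degree A u := by
  simp [trimmedNodes]

lemma HasDiscrepancy.mul_card_trimmedNodes_le (hn : 1 ≤ n) (hA : HasDiscrepancy d K A)
    (hd : 0 ≤ d) (hK : 0 < K) (hτ : (4 * K + 3) * d ≤ τ) :
    d * (trimmedNodes A τ).card ≤ n := by
  have hn_pos : (0 : ℝ) < n := by exact_mod_cast hn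
  set J := trimmedNodes A τ
  rcases J.eq_empty_or_nonempty with hJ | hJ
  · simp [hJ]
  have : NeZero n := ⟨by lia⟩
  have hdisc := hA 0 (by lia) 0 (by lia) 2 (by lia) J Finset.univ hJ Finset.univ_nonempty
  have hedges : J.card * τ ≤ edgesBetween A J Finset.univ := by
    rw [← nsmul_eq_mul, edgesBetween]
    exact J.card_nsmul_le_sum _ _ fun u hu => mem_trimmedNodes.1 hu
  have hmean : d / n * J.card * n * Real.exp (2 * ((2 : ℕ) / 4)) ≤ d * J.card * 3 := by
    rw [mul_right_comm (d / n), div_mul_cancel₀ _ hn_pos.ne']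
    refine mul_le_mul_of_nonneg_left ?_ (by positivity)
    norm_num
    linarith [Real.exp_one_lt_d9]
  have hτ_card := mul_le_mul_of_nonneg_left hτ (Nat.cast_nonneg (α := ℝ) J.card)
  simp only [entropyCost, Finset.card_univ, Fintype.card_fin, CharP.cast_eq_zero, mul_zero,
    zero_mul, neg_zero, Real.exp_zero, mul_one, zero_add] at hdisc
  push_cast at hdisc hmean
  exact le_of_mul_le_mul_left (by nlinarith : K * (d * J.card) ≤ K * n) hK

lemma mul_sum_abs_mul_sum_abs_le (hn : 1 ≤ n) (hd : 0 ≤ d) (hq : d ≤ 4 ^ q)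
    (hz : z ∈ latticeBall n) (hw : w ∈ latticeBall n) {J : Finset (Fin n)}
    (hJ : d * J.card ≤ n) :
    d / n * ((∑ u ∈ J, |(z u : ℝ)|) * ∑ v, |(w v : ℝ)|) ≤ 16 * (n * 2 ^ q) := by
  have hn_pos : (0 : ℝ) < n := by exact_mod_cast hn
  have hz_sum : (∑ u ∈ J, |(z u : ℝ)|) ^ 2 ≤ J.card * (16 * n) := by
    refine sq_sum_le_card_mul_sum_sq.trans (mul_le_mul_of_nonneg_left ?_ (Nat.cast_nonneg _))
    simp only [sq_abs]
    exact (Finset.sum_le_univ_sum_of_nonneg fun u => sq_nonneg _).trans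
      (sum_sq_le_of_mem_latticeBall hz)
  have hw_sum : (∑ v, |(w v : ℝ)|) ^ 2 ≤ n * (16 * n) := by
    refine sq_sum_le_card_mul_sum_sq.trans ?_
    simp only [sq_abs, Finset.card_univ, Fintype.card_fin]
    exact mul_le_mul_of_nonneg_left (sum_sq_le_of_mem_latticeBall hw) hn_pos.le
  refine le_of_sq_le_sq ?_ (by positivity)
  calc _ = (d / n) ^ 2 * ((∑ u ∈ J, |(z u : ℝ)|) ^ 2 * (∑ v, |(w v : ℝ)|) ^ 2) := by ring
    _ ≤ (d / n) ^ 2 * (J.card * (16 * n) * (n * (16 * n))) := by gcongr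
    _ = 256 * n * (d * (d * J.card)) := by
        field_simp
        ring
    _ ≤ 256 * n * (4 ^ q * n) := by gcongr
    _ = (16 * (n * 2 ^ q)) ^ 2 := by
        rw [show (4 : ℝ) = 2 * 2 by norm_num, mul_pow]
        ring

lemma piecewise_zero_mem_latticeBall (hz : z ∈ latticeBall n) (J : Finset (Fin n)) :
    J.piecewise 0 z ∈ latticeBall n := by
  refine mem_latticeBall.2 ((Finset.sum_le_sum fun u _ => ?_).trans (mem_latticeBall.1 hz))
  by_cases hu : u ∈ J
  · simpa [hu] using sq_nonneg (z u)
  · simp [hu]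

lemma mul_mul_trim_sub_le (hP : ∀ u v, 0 ≤ P u v) {δ : ℝ} (hδ : ∀ u v, P u v ≤ δ) (A : Adj n)
    (τ : ℝ) (z w : Fin n → ℤ) (u v : Fin n) :
    (z u : ℝ) * w v * (trim A τ - P) u v ≤
      ((trimmedNodes A τ).piecewise 0 z u : ℝ) * ((trimmedNodes A τ).piecewise 0 w v : ℤ) *
          (aVal A u v - P u v) +
        (if u ∈ trimmedNodes A τ then δ * (|(z u : ℝ)| * |(w v : ℝ)|) else 0) +
        (if v ∈ trimmedNodes A τ then δ * (|(w v : ℝ)| * |(z u : ℝ)|) else 0) := by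
  have hneg : -((z u : ℝ) * w v * P u v) ≤ δ * (|(z u : ℝ)| * |(w v : ℝ)|) :=
    calc -((z u : ℝ) * w v * P u v) = P u v * -((z u : ℝ) * w v) := by ring
      _ ≤ δ * |(z u : ℝ) * w v| :=
        (mul_le_mul_of_nonneg_left (neg_le_abs _) (hP u v)).trans
          (mul_le_mul_of_nonneg_right (hδ u v) (abs_nonneg _))
      _ = _ := by rw [abs_mul]
  have hnonneg : 0 ≤ δ * (|(z u : ℝ)| * |(w v : ℝ)|) :=
    mul_nonneg ((hP u v).trans (hδ u v)) (by positivity)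
  rw [Matrix.sub_apply, trim, mul_comm |(w v : ℝ)|]
  simp only [← mem_trimmedNodes]
  by_cases hu : u ∈ trimmedNodes A τ <;> by_cases hv : v ∈ trimmedNodes A τ <;>
    simp [hu, hv] <;> linarith

lemma sum_sum_mul_mul_trim_sub_le (hn : 1 ≤ n) (hP : ∀ u v, 0 ≤ P u v ∧ P u v ≤ 1)
    (hd : ∀ u v, P u v ≤ d / n) (hd_nonneg : 0 ≤ d) (hK : 0 < K) (hq : d ≤ 4 ^ q)
    (hA_graph : IsGraph A) (hA : HasDiscrepancy d K A) (hA_light : LightConcentrated P q K A)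
    {B : ℝ} (hB : 0 ≤ B) (hτ : (4 * K + 3) * d ≤ τ) (hτ' : τ ≤ B * d)
    (hz : z ∈ latticeBall n) (hw : w ∈ latticeBall n) :
    ∑ u, ∑ v, (z u : ℝ) * w v * (trim A τ - P) u v ≤
      (64 * B + 3400 * K + 2968) * (n * 2 ^ q) := by
  set J := trimmedNodes A τ with hJ
  have hJ_card : d * J.card ≤ n := hA.mul_card_trimmedNodes_le hn hd_nonneg hK hτ
  have hdeg {x : Fin n → ℤ} (u : Fin n) (hu : J.piecewise 0 x u ≠ 0) : degree A u ≤ B * 4 ^ q := by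
    have hu_notMem : u ∉ J := fun h => hu (J.piecewise_eq_of_mem _ _ h)
    rw [hJ, mem_trimmedNodes, not_le] at hu_notMem
    exact (hu_notMem.le.trans hτ').trans (mul_le_mul_of_nonneg_left hq hB)
  have hrows {x y : Fin n → ℤ} (hx : x ∈ latticeBall n) (hy : y ∈ latticeBall n) :
      ∑ u, ∑ v, (if u ∈ J then d / n * (|(x u : ℝ)| * |(y v : ℝ)|) else 0) ≤ 16 * (n * 2 ^ q) := by
    refine (mul_sum_abs_mul_sum_abs_le hn hd_nonneg hq hx hy hJ_card).trans_eq' ?_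
    rw [Finset.sum_comm, Finset.sum_mul_sum, Finset.sum_comm (s := J)]
    simp only [Finset.mul_sum, Finset.sum_ite_mem, Finset.univ_inter]
  have hcore := sum_sum_mul_mul_aVal_sub_le hn hP hd hd_nonneg hK.le hq hA_graph hA hA_light hB
    (piecewise_zero_mem_latticeBall hz J) (piecewise_zero_mem_latticeBall hw J) hdeg hdeg
  have hcols := hrows hw hz
  rw [Finset.sum_comm] at hcols
  refine (Finset.sum_le_sum fun u _ => Finset.sum_le_sum fun v _ =>
    mul_mul_trim_sub_le (fun u v => (hP u v).1) hd A τ z w u v).trans ?_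
  simp only [Finset.sum_add_distrib]
  linarith [hrows hz hw]

end Trim

/-! ### The spectral norm of the trimmed adjacency matrix -/

section SpectralNorm

variable {n : ℕ} {P : Matrix (Fin n) (Fin n) ℝ} {d : ℝ}

lemma opNorm_trim_sub_le {K B τ : ℝ} {q : ℕ} {A : Adj n} (hn : 1 ≤ n)
    (hP : ∀ u v, 0 ≤ P u v ∧ P u v ≤ 1) (hd : ∀ u v, P u v ≤ d / n) (hd_nonneg : 0 ≤ d)
    (hK : 0 < K) (hq : d ≤ 4 ^ q) (hA_graph : IsGraph A) (hA : HasDiscrepancy d K A)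
    (hA_light : LightConcentrated P q K A) (hB : 0 ≤ B) (hτ : (4 * K + 3) * d ≤ τ)
    (hτ' : τ ≤ B * d) :
    opNorm (trim A τ - P) ≤ (64 * B + 3400 * K + 2968) / 8 * 2 ^ q := by
  rw [div_mul_eq_mul_div]
  refine opNorm_le_of_forall_latticeBall hn fun z hz w hw => ?_
  rw [mul_assoc, mul_comm (2 ^ q)]
  exact sum_sum_mul_mul_trim_sub_le hn hP hd hd_nonneg hK hq hA_graph hA hA_light hB hτ hτ' hz hw

lemma one_sub_rpow_le_prob_opNorm_trim_sub_le (hn : 1 ≤ n) (hs : ∀ u v, P u v = P v u)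
    (hP : ∀ u v, 0 ≤ P u v ∧ P u v ≤ 1) (hd : ∀ u v, P u v ≤ d / n) (hd_one : 1 ≤ d) {c B : ℝ}
    (hc : 0 ≤ c) (hB : 0 ≤ B) :
    1 - (n : ℝ) ^ (-c) ≤ prob P {A | ∀ τ, (4 * (c + 12) + 3) * d ≤ τ → τ ≤ B * d →
      opNorm (trim A τ - P) ≤ (64 * B + 3400 * (c + 12) + 2968) / 4 * √d} := by
  obtain ⟨m, hm, hm'⟩ := exists_nat_pow_near hd_one (by norm_num : (1 : ℝ) < 4)
  have hpow : (2 : ℝ) ^ (m + 1) ≤ 2 * √d := by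
    rw [pow_succ']
    refine mul_le_mul_of_nonneg_left (Real.le_sqrt_of_sq_le ?_) zero_le_two
    rwa [← pow_mul, mul_comm, pow_mul, show (2 : ℝ) ^ 2 = 4 by norm_num]
  refine (one_sub_rpow_le_prob_hasDiscrepancy_and_lightConcentrated hn hs hP hd hm'.le hc).trans
    (prob_mono hP ?_)
  rintro A ⟨⟨hA_graph, hA⟩, hA_light⟩ τ hτ hτ'
  calc opNorm (trim A τ - P) ≤ (64 * B + 3400 * (c + 12) + 2968) / 8 * 2 ^ (m + 1) :=
        opNorm_trim_sub_le hn hP hd (by positivity) (by positivity) hm'.le hA_graph hA hA_light hB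
          hτ hτ'
    _ ≤ (64 * B + 3400 * (c + 12) + 2968) / 8 * (2 * √d) := by gcongr
    _ = _ := by ring

lemma le_pmax (hP : ∀ u v, P u v ≤ 1) (u v : Fin n) : P u v ≤ pmax P :=
  le_csSup ⟨1, by rintro _ ⟨u, v, rfl⟩; exact hP u v⟩ ⟨u, v, rfl⟩

lemma pmax_nonneg (hP : ∀ u v, 0 ≤ P u v) : 0 ≤ pmax P :=
  Real.sSup_nonneg (by rintro _ ⟨u, v, rfl⟩; exact hP u v)

lemma opNorm_eq_zero_of_isEmpty (M : Matrix (Fin 0) (Fin 0) ℝ) : opNorm M = 0 := by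
  simp [opNorm, sqnorm]

end SpectralNorm

/-- Lemma 5 (operator norm bound for the trimmed adjacency matrix). -/
theorem statement_13 (C' : ℝ) (hC' : 0 < C') :
    ∃ C C1 C2 : ℝ, 0 < C ∧ 0 < C1 ∧ C1 < C2 ∧
      ∀ (n : ℕ) (P : Matrix (Fin n) (Fin n) ℝ),
        (∀ u v, P u v = P v u) → (∀ u v, 0 ≤ P u v ∧ P u v ≤ 1) →
        1 - (n : ℝ) ^ (-C') ≤ prob P
          { A | ∀ τ : ℝ, C1 * ((n : ℝ) * pmax P + 1) ≤ τ →
              τ ≤ C2 * ((n : ℝ) * pmax P + 1) →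
              opNorm (trim A τ - P) ≤ C * Real.sqrt ((n : ℝ) * pmax P + 1) } := by
  refine ⟨(64 * (4 * (C' + 12) + 4) + 3400 * (C' + 12) + 2968) / 4, 4 * (C' + 12) + 3,
    4 * (C' + 12) + 4, by positivity, by positivity, by linarith, fun n P hs hP => ?_⟩
  rcases n.eq_zero_or_pos with rfl | hn
  · refine (sub_le_self _ (by positivity)).trans ((prob_univ P).ge.trans
      (prob_mono hP fun A _ τ _ _ => ?_))
    rw [opNorm_eq_zero_of_isEmpty]
    positivity
  have hpmax : 0 ≤ (n : ℝ) * pmax P := by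
    have := pmax_nonneg fun u v => (hP u v).1
    positivity
  have hP_le (u v : Fin n) : P u v ≤ ((n : ℝ) * pmax P + 1) / n := by
    rw [le_div_iff₀' (by exact_mod_cast hn)]
    have := mul_le_mul_of_nonneg_left (le_pmax (fun u v => (hP u v).2) u v) n.cast_nonneg
    linarith
  exact one_sub_rpow_le_prob_opNorm_trim_sub_le hn hs hP hP_le (by linarith) hC'.le (by positivity)

end SBM
end

section
/- Let B ∈ ℝ^{k×k} be symmetric, let σ : [n] → [k] have all community sizes n_i = #{u : σ(u) = i} ≥ 1, and let P be the n×n matrix with P_{uv} = B_{σ(u)σ(v)}. Let Z ∈ {0,1}^{n×k} be the membership matrix with Z_{u,i} = 1 if and only if σ(u) = i, and let Δ = diag(√n_1, …, √n_k). Then there exist a k×k orthogonal matrix W and a k×k diagonal matrix Λ such that P = U·Λ·Uᵀ, where U = Z·Δ^{−1}·W satisfies Uᵀ·U = I_k. -/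
open scoped BigOperators
open Filter

namespace SBM

open Filter Matrix

/-! Writing `s i` for the square root of the size of the `i`-th community and `Δ = diagonal s`, the
matrix `N = Z Δ⁻¹` has orthonormal columns, since the columns of `Z` are indicators of disjoint sets
of size `s i ^ 2`. As `Z = N Δ`, the matrix `P = Z B Zᴴ` equals `N (Δ B Δ) Nᴴ`, so a unitary
diagonalization `Δ B Δ = W Λ Wᴴ` of the small matrix gives `P = U Λ Uᴴ` with `U = N W`. -/

section MembershipMatrix

variable {α ι : Type*} [DecidableEq ι]

/-- The membership matrix `Z` of an assignment `σ` of communities in `ι` to nodes in `α`: a node's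
row is the indicator of its community. -/
def membershipMatrix (R : Type*) [Zero R] [One R] (σ : α → ι) : Matrix α ι R :=
  Matrix.of fun u i => if σ u = i then 1 else 0

theorem membershipMatrix_mul {R β : Type*} [NonAssocSemiring R] [Fintype ι] (σ : α → ι)
    (M : Matrix ι β R) : membershipMatrix R σ * M = M.submatrix σ id := by
  ext u j
  simp [membershipMatrix, Matrix.mul_apply]

theorem mul_transpose_membershipMatrix {R β : Type*} [NonAssocSemiring R] [Fintype ι] (σ : α → ι)
    (M : Matrix β ι R) : M * (membershipMatrix R σ)ᵀ = M.submatrix id σ := by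
  ext i u
  simp [membershipMatrix, Matrix.mul_apply]

theorem transpose_membershipMatrix_mul_self {R : Type*} [NonAssocSemiring R] [Fintype α]
    (σ : α → ι) :
    (membershipMatrix R σ)ᵀ * membershipMatrix R σ =
      diagonal fun i => (({u | σ u = i} : Finset α).card : R) := by
  ext i j
  rcases eq_or_ne i j with rfl | hij
  · simp [membershipMatrix, Matrix.mul_apply, ← ite_and]
  · have disjoint_communities (u : α) : ¬(σ u = j ∧ σ u = i) :=
      fun ⟨hj, hi⟩ => hij (hi.symm.trans hj)
    simp [membershipMatrix, Matrix.mul_apply, hij, ← ite_and, disjoint_communities]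

theorem conjTranspose_membershipMatrix {R : Type*} [NonAssocSemiring R] [StarRing R] (σ : α → ι) :
    (membershipMatrix R σ)ᴴ = (membershipMatrix R σ)ᵀ := by
  ext i u
  by_cases hu : σ u = i <;> simp [membershipMatrix, hu]

end MembershipMatrix

section NormalizedMembership

variable (𝕜 : Type*) [RCLike 𝕜] {α ι : Type*} [Fintype α] [DecidableEq ι]

/-- The square root of the size of the `i`-th community, i.e. the `i`-th diagonal entry of `Δ`,
as a scalar of `𝕜`. -/
noncomputable def sqrtCommunitySize (σ : α → ι) (i : ι) : 𝕜 :=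
  (Real.sqrt ({u | σ u = i} : Finset α).card : ℝ)

theorem star_sqrtCommunitySize (σ : α → ι) (i : ι) :
    star (sqrtCommunitySize 𝕜 σ i) = sqrtCommunitySize 𝕜 σ i :=
  RCLike.conj_ofReal _

theorem sqrtCommunitySize_mul_self (σ : α → ι) (i : ι) :
    sqrtCommunitySize 𝕜 σ i * sqrtCommunitySize 𝕜 σ i = (({u | σ u = i} : Finset α).card : 𝕜) := by
  rw [sqrtCommunitySize, ← RCLike.ofReal_mul, Real.mul_self_sqrt (Nat.cast_nonneg _),
    RCLike.ofReal_natCast]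

theorem sqrtCommunitySize_ne_zero {σ : α → ι} (hσ : Function.Surjective σ) (i : ι) :
    sqrtCommunitySize 𝕜 σ i ≠ 0 := by
  obtain ⟨u, hu⟩ := hσ i
  have nonempty_community : ({u | σ u = i} : Finset α).Nonempty := ⟨u, by simpa using hu⟩
  apply left_ne_zero_of_mul (b := sqrtCommunitySize 𝕜 σ i)
  rw [sqrtCommunitySize_mul_self]
  exact Nat.cast_ne_zero.mpr nonempty_community.card_ne_zero

variable [Fintype ι]

/-- The column-normalized membership matrix `Z Δ⁻¹`. The column of an empty community is `0`. -/
noncomputable def normalizedMembershipMatrix (σ : α → ι) : Matrix α ι 𝕜 :=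
  membershipMatrix 𝕜 σ * diagonal fun i => (sqrtCommunitySize 𝕜 σ i)⁻¹

variable {σ : α → ι}

theorem normalizedMembershipMatrix_mul_diagonal (hσ : Function.Surjective σ) :
    normalizedMembershipMatrix 𝕜 σ * diagonal (sqrtCommunitySize 𝕜 σ) = membershipMatrix 𝕜 σ := by
  simp [normalizedMembershipMatrix, Matrix.mul_assoc, sqrtCommunitySize_ne_zero 𝕜 hσ]

theorem conjTranspose_normalizedMembershipMatrix_mul_self (hσ : Function.Surjective σ) :
    (normalizedMembershipMatrix 𝕜 σ)ᴴ * normalizedMembershipMatrix 𝕜 σ = 1 := by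
  set D : Matrix ι ι 𝕜 := diagonal fun i => (sqrtCommunitySize 𝕜 σ i)⁻¹ with hD
  have hD_star : Dᴴ = D := by
    simp only [hD, diagonal_conjTranspose, Pi.star_def, star_inv₀, star_sqrtCommunitySize]
  calc (normalizedMembershipMatrix 𝕜 σ)ᴴ * normalizedMembershipMatrix 𝕜 σ
      = D * ((membershipMatrix 𝕜 σ)ᵀ * membershipMatrix 𝕜 σ) * D := by
        rw [normalizedMembershipMatrix, conjTranspose_mul, conjTranspose_membershipMatrix,
          ← hD, hD_star]
        simp only [Matrix.mul_assoc]
    _ = 1 := by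
        rw [transpose_membershipMatrix_mul_self]
        simp [hD, ← sqrtCommunitySize_mul_self, sqrtCommunitySize_ne_zero 𝕜 hσ]

variable {𝕜}

theorem submatrix_eq_normalizedMembershipMatrix_mul (hσ : Function.Surjective σ)
    (B : Matrix ι ι 𝕜) :
    B.submatrix σ σ =
      normalizedMembershipMatrix 𝕜 σ *
        (diagonal (sqrtCommunitySize 𝕜 σ) * B * (diagonal (sqrtCommunitySize 𝕜 σ))ᴴ) *
        (normalizedMembershipMatrix 𝕜 σ)ᴴ := by
  have hZ := normalizedMembershipMatrix_mul_diagonal 𝕜 hσ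
  calc B.submatrix σ σ
      = membershipMatrix 𝕜 σ * B * (membershipMatrix 𝕜 σ)ᴴ := by
        rw [conjTranspose_membershipMatrix, mul_transpose_membershipMatrix, membershipMatrix_mul,
          submatrix_submatrix, Function.comp_id, Function.id_comp]
    _ = _ := by
        rw [← hZ, conjTranspose_mul]
        simp only [Matrix.mul_assoc]

end NormalizedMembership

theorem exists_unitary_diagonalization_of_isometry {𝕜 α ι : Type*} [RCLike 𝕜] [Fintype α]
    [Fintype ι] [DecidableEq ι] {N : Matrix α ι 𝕜} (hN : Nᴴ * N = 1) {M : Matrix ι ι 𝕜}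
    (hM : M.IsHermitian) :
    ∃ W ∈ unitaryGroup ι 𝕜, ∃ Λ : ι → ℝ,
      (N * W)ᴴ * (N * W) = 1 ∧
      N * M * Nᴴ = N * W * diagonal (fun i => (Λ i : 𝕜)) * (N * W)ᴴ := by
  refine ⟨hM.eigenvectorUnitary, hM.eigenvectorUnitary.2, hM.eigenvalues, ?_, ?_⟩
  · rw [conjTranspose_mul, Matrix.mul_assoc, ← Matrix.mul_assoc Nᴴ, hN, Matrix.one_mul,
      ← star_eq_conjTranspose, Unitary.coe_star_mul_self]
  · conv_lhs => rw [hM.spectral_theorem, Unitary.conjStarAlgAut_apply, star_eq_conjTranspose]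
    simp only [conjTranspose_mul, Matrix.mul_assoc, Function.comp_def]

theorem surjective_of_one_le_comSize {n k : ℕ} {σ : Fin n → Fin k}
    (hσ : ∀ i, 1 ≤ comSize σ i) : Function.Surjective σ := by
  intro i
  obtain ⟨u, hu⟩ := Finset.card_pos.mp (Nat.one_le_cast.mp (hσ i))
  exact ⟨u, (Finset.mem_filter.mp hu).2⟩

theorem statement_14_general {𝕜 α ι : Type*} [RCLike 𝕜] [Fintype α] [Fintype ι] [DecidableEq ι]
    {B : Matrix ι ι 𝕜} (hB : B.IsHermitian) {σ : α → ι} (hσ : Function.Surjective σ) :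
    ∃ W ∈ unitaryGroup ι 𝕜, ∃ Λ : ι → ℝ,
      (normalizedMembershipMatrix 𝕜 σ * W)ᴴ * (normalizedMembershipMatrix 𝕜 σ * W) = 1 ∧
      B.submatrix σ σ =
        normalizedMembershipMatrix 𝕜 σ * W * diagonal (fun i => (Λ i : 𝕜)) *
          (normalizedMembershipMatrix 𝕜 σ * W)ᴴ := by
  rw [submatrix_eq_normalizedMembershipMatrix_mul hσ B]
  exact exists_unitary_diagonalization_of_isometry
    (conjTranspose_normalizedMembershipMatrix_mul_self 𝕜 hσ)
    (isHermitian_mul_mul_conjTranspose _ hB)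

/-- Lemma (eigendecomposition of `P` with membership-matrix eigenvectors). -/
theorem statement_14
    (n k : ℕ) (B : Matrix (Fin k) (Fin k) ℝ)
    (hB : ∀ i j, B i j = B j i)
    (σ : Fin n → Fin k)
    (hsz : ∀ i, 1 ≤ comSize σ i) :
    ∃ (W : Matrix (Fin k) (Fin k) ℝ) (Λ : Fin k → ℝ),
      Wᵀ * W = 1 ∧
      (Matrix.of (fun (u : Fin n) (i : Fin k) => if σ u = i then (1 : ℝ) else 0) *
          Matrix.diagonal (fun i => (Real.sqrt (comSize σ i))⁻¹) * W)ᵀ *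
        (Matrix.of (fun (u : Fin n) (i : Fin k) => if σ u = i then (1 : ℝ) else 0) *
          Matrix.diagonal (fun i => (Real.sqrt (comSize σ i))⁻¹) * W) = 1 ∧
      pMat B σ =
        (Matrix.of (fun (u : Fin n) (i : Fin k) => if σ u = i then (1 : ℝ) else 0) *
            Matrix.diagonal (fun i => (Real.sqrt (comSize σ i))⁻¹) * W) *
          Matrix.diagonal Λ *
          (Matrix.of (fun (u : Fin n) (i : Fin k) => if σ u = i then (1 : ℝ) else 0) *
            Matrix.diagonal (fun i => (Real.sqrt (comSize σ i))⁻¹) * W)ᵀ := by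
  obtain ⟨W, hW, Λ, hU, hP⟩ := statement_14_general
    (IsHermitian.ext fun i j => hB j i) (surjective_of_one_le_comSize hsz)
  -- Over `ℝ` the conjugation and the coercion to `𝕜` unfold to the identity.
  exact ⟨W, Λ, mem_unitaryGroup_iff'.mp hW, hU, hP⟩

end SBM
end
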